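/- arXiv:1808.04791 — 9 statements merged into one kernel-verified Lean document; each statement's English description precedes it below -/
import Mathlib

section
/- Let m, n : ℕ and let α = (α₁, …, α_m) and β = (β₁, …, β_n) be lists of elements of Fin χ. Then the fluctuation relation implies the general relation between cumulants and their responses: D[α; β] f = (−1)^m · Σ_{T ⊆ {1, …, n}} D[α ++ β|_T ; β|_{Tᶜ}] g, where the sum runs over all subsets T of the index set {1, …, n}, β|_T is the sublist of β with positions in T, and β|_{Tᶜ} is the complementary sublist. -/
/-- Partial derivative of `F (λ, A)` with respect to the counting parameter `λ_i`. -/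
noncomputable def pderivLam {χ : ℕ} (i : Fin χ)
    (F : (Fin χ → ℝ) → (Fin χ → ℝ) → ℝ) : (Fin χ → ℝ) → (Fin χ → ℝ) → ℝ :=
  fun l a => fderiv ℝ (fun l' => F l' a) l (Pi.single i 1)

/-- Partial derivative of `F (λ, A)` with respect to the affinity `A_i`. -/
noncomputable def pderivAff {χ : ℕ} (i : Fin χ)
    (F : (Fin χ → ℝ) → (Fin χ → ℝ) → ℝ) : (Fin χ → ℝ) → (Fin χ → ℝ) → ℝ :=
  fun l a => fderiv ℝ (fun a' => F l a') a (Pi.single i 1)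

/-- Mixed partial derivative `D[α; β] F`: derivatives with respect to the counting
parameters `λ_{α₁}, …, λ_{α_m}` and the affinities `A_{β₁}, …, A_{β_n}`, evaluated at
`(λ, A) = (0, 0)`. -/
noncomputable def Dmix {χ : ℕ} (α β : List (Fin χ))
    (F : (Fin χ → ℝ) → (Fin χ → ℝ) → ℝ) : ℝ :=
  (List.foldr pderivLam (List.foldr pderivAff F β) α) 0 0

/-!
The fluctuation relation says `f = g ∘ R` for the linear map `R (λ, A) = (A - λ, A)`, so
differentiating `f` along `v` is differentiating `g` along `R v` and then composing with `R`.
Here `R` sends the direction of `λ_i` to its negative, whence the sign `(-1) ^ m`, and the direction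
of `A_i` to the sum of the directions of `λ_i` and `A_i`. The `n`-th derivative of `g` is symmetric
and multilinear, so the `n` sums expand into a sum over the subsets of the index set. Finally `R`
fixes the origin.
-/

section Filter

variable {ι : Type*} (p : ι → Prop) [DecidablePred p] (l : List ι)

theorem filter_append_filter_not_perm : (l.filter (p ·) ++ l.filter (¬p ·)).Perm l := by
  simpa using List.filter_append_perm (p ·) l

theorem length_filter_add_length_filter_not :
    (l.filter (p ·)).length + (l.filter (¬p ·)).length = l.length := by
  simpa using (filter_append_filter_not_perm p l).length_eq

end Filter

section IteratedDirDeriv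

variable {𝕜 E E' F : Type*} [NontriviallyNormedField 𝕜]
  [NormedAddCommGroup E] [NormedSpace 𝕜 E] [NormedAddCommGroup E'] [NormedSpace 𝕜 E']
  [NormedAddCommGroup F] [NormedSpace 𝕜 F]

variable (𝕜) in
/-- The iterated directional derivative of `f` along a list of vectors, whose last entry is
differentiated first. Working with lists rather than with the multilinear `iteratedFDeriv` makes
concatenation and permutation of directions free of casts between index types. -/
noncomputable def iteratedDirDeriv (v : List E) (f : E → F) : E → F :=
  v.foldr (fun u h x => fderiv 𝕜 h x u) f

theorem iteratedDirDeriv_nil (f : E → F) : iteratedDirDeriv 𝕜 [] f = f :=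
  rfl

theorem iteratedDirDeriv_cons (u : E) (v : List E) (f : E → F) :
    iteratedDirDeriv 𝕜 (u :: v) f = fun x => fderiv 𝕜 (iteratedDirDeriv 𝕜 v f) x u :=
  rfl

theorem iteratedDirDeriv_append (v w : List E) (f : E → F) :
    iteratedDirDeriv 𝕜 (v ++ w) f = iteratedDirDeriv 𝕜 v (iteratedDirDeriv 𝕜 w f) :=
  List.foldr_append

theorem contDiff_iteratedDirDeriv {n : WithTop ℕ∞} {v : List E} {f : E → F}
    (hf : ContDiff 𝕜 (n + v.length) f) : ContDiff 𝕜 n (iteratedDirDeriv 𝕜 v f) := by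
  induction v generalizing n with
  | nil => simpa [iteratedDirDeriv_nil] using hf
  | cons u v ih =>
    have hv : ContDiff 𝕜 (n + 1) (iteratedDirDeriv 𝕜 v f) :=
      ih (hf.of_le (by simp [add_assoc, add_comm (1 : WithTop ℕ∞)]))
    exact (hv.fderiv_right le_rfl).clm_apply contDiff_const

theorem differentiable_iteratedDirDeriv {v : List E} {f : E → F}
    (hf : ContDiff 𝕜 (v.length + 1 : ℕ) f) : Differentiable 𝕜 (iteratedDirDeriv 𝕜 v f) :=
  (contDiff_iteratedDirDeriv (n := 1) (hf.of_le (by simp [add_comm]))).differentiable one_ne_zero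

theorem iteratedDirDeriv_ofFn {n : ℕ} {f : E → F} (hf : ContDiff 𝕜 n f) (v : Fin n → E) (x : E) :
    iteratedDirDeriv 𝕜 (List.ofFn v) f x = iteratedFDeriv 𝕜 n f x v := by
  induction n generalizing x with
  | zero => simp [iteratedDirDeriv_nil]
  | succ n ih =>
    have hn : iteratedDirDeriv 𝕜 (List.ofFn (Fin.tail v)) f =
        fun y => iteratedFDeriv 𝕜 n f y (Fin.tail v) :=
      funext (ih (hf.of_le (by simp)) (Fin.tail v))
    have hd : DifferentiableAt 𝕜 (iteratedFDeriv 𝕜 n f) x :=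
      hf.differentiable_iteratedFDeriv (mod_cast n.lt_succ_self) x
    rw [hd.iteratedFDeriv_succ_apply_left', ← hn, List.ofFn_succ]
    rfl

theorem iteratedDirDeriv_comp_continuousLinearMap (L : E' →L[𝕜] E) {v : List E'} {f : E → F}
    (hf : ContDiff 𝕜 v.length f) :
    iteratedDirDeriv 𝕜 v (f ∘ L) = iteratedDirDeriv 𝕜 (v.map L) f ∘ L := by
  induction v with
  | nil => rfl
  | cons u v ih =>
    funext x
    have hd : Differentiable 𝕜 (iteratedDirDeriv 𝕜 (v.map L) f) :=
      differentiable_iteratedDirDeriv (by simpa using hf)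
    simp only [iteratedDirDeriv_cons, ih (hf.of_le (by simp))]
    rw [fderiv_comp x (hd _) L.differentiableAt, L.fderiv]
    rfl

theorem iteratedDirDeriv_map_smul (c : 𝕜) (v : List E) (f : E → F) :
    iteratedDirDeriv 𝕜 (v.map (c • ·)) f = c ^ v.length • iteratedDirDeriv 𝕜 v f := by
  induction v with
  | nil => simp [iteratedDirDeriv_nil]
  | cons u v ih =>
    funext x
    simp [iteratedDirDeriv_cons, ih, fderiv_const_smul_field, pow_succ', smul_smul]

section Symmetric

variable [IsRCLikeNormedField 𝕜]

theorem fderiv_fderiv_apply_comm {f : E → F} (hf : ContDiff 𝕜 2 f) (u v x : E) :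
    fderiv 𝕜 (fun y => fderiv 𝕜 f y v) x u = fderiv 𝕜 (fun y => fderiv 𝕜 f y u) x v := by
  have hd : DifferentiableAt 𝕜 (fderiv 𝕜 f) x :=
    (hf.fderiv_right (m := 1) one_add_one_eq_two.le).differentiable one_ne_zero x
  have hsymm : IsSymmSndFDerivAt 𝕜 f x :=
    hf.contDiffAt.isSymmSndFDerivAt minSmoothness_of_isRCLikeNormedField.le
  simpa [fderiv_clm_apply hd] using hsymm.eq u v

theorem iteratedDirDeriv_perm {v w : List E} (h : v.Perm w) {f : E → F}
    (hf : ContDiff 𝕜 v.length f) : iteratedDirDeriv 𝕜 v f = iteratedDirDeriv 𝕜 w f := by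
  induction h with
  | nil => rfl
  | cons u _ ih => rw [iteratedDirDeriv_cons, iteratedDirDeriv_cons, ih (hf.of_le (by simp))]
  | swap a b v =>
    have hv : ContDiff 𝕜 2 (iteratedDirDeriv 𝕜 v f) :=
      contDiff_iteratedDirDeriv <| hf.of_le <| by
        simp [add_assoc, one_add_one_eq_two, add_comm (2 : WithTop ℕ∞)]
    exact funext (fderiv_fderiv_apply_comm hv b a)
  | trans h _ ih₁ ih₂ => rw [ih₁ hf, ih₂ (h.length_eq ▸ hf)]

theorem iteratedDirDeriv_map_add {ι : Type*} (a b : ι → E) {l : List ι} {f : E → F}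
    (hf : ContDiff 𝕜 l.length f) (x : E) :
    iteratedDirDeriv 𝕜 (l.map fun i => a i + b i) f x =
      ∑ T : Finset (Fin l.length),
        iteratedDirDeriv 𝕜
          ((((List.finRange l.length).filter (· ∈ T)).map l.get).map a ++
            (((List.finRange l.length).filter (· ∉ T)).map l.get).map b) f x := by
  have hsum : l.map (fun i => a i + b i) = List.ofFn (a ∘ l.get + b ∘ l.get) :=
    (congrArg _ (List.ofFn_get l).symm).trans (List.map_ofFn ..)
  rw [hsum, iteratedDirDeriv_ofFn hf, ContinuousMultilinearMap.map_add_univ]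
  refine Finset.sum_congr rfl fun T _ => ?_
  set u : Fin l.length → E := T.piecewise (a ∘ l.get) (b ∘ l.get)
  have ha : (((List.finRange l.length).filter (· ∈ T)).map l.get).map a =
      ((List.finRange l.length).filter (· ∈ T)).map u := by
    rw [List.map_map]
    exact List.map_congr_left fun i hi => by simp [u, show i ∈ T by simpa using hi]
  have hb : (((List.finRange l.length).filter (· ∉ T)).map l.get).map b =
      ((List.finRange l.length).filter (· ∉ T)).map u := by
    rw [List.map_map]
    exact List.map_congr_left fun i hi => by simp [u, show i ∉ T by simpa using hi]
  have hperm : (List.ofFn u).Perm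
      (((List.finRange l.length).filter (· ∈ T)).map u ++
        ((List.finRange l.length).filter (· ∉ T)).map u) := by
    rw [List.ofFn_eq_map, ← List.map_append]
    exact ((filter_append_filter_not_perm (· ∈ T) _).map u).symm
  rw [ha, hb, ← iteratedDirDeriv_ofFn hf, iteratedDirDeriv_perm hperm (by simpa using hf)]

theorem iteratedDirDeriv_append_map_add {ι : Type*} (a b : ι → E) {v : List E} {l : List ι}
    {f : E → F} (hf : ContDiff 𝕜 (v.length + l.length : ℕ) f) (x : E) :
    iteratedDirDeriv 𝕜 (v ++ l.map fun i => a i + b i) f x =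
      ∑ T : Finset (Fin l.length),
        iteratedDirDeriv 𝕜
          (v ++ (((List.finRange l.length).filter (· ∈ T)).map l.get).map a ++
            (((List.finRange l.length).filter (· ∉ T)).map l.get).map b) f x := by
  have hv : ContDiff 𝕜 l.length (iteratedDirDeriv 𝕜 v f) :=
    contDiff_iteratedDirDeriv (hf.of_le (by simp [add_comm]))
  -- With `v` differentiated first, the sum over `T` need not be differentiated along `v`.
  rw [iteratedDirDeriv_perm List.perm_append_comm (by simpa using hf), iteratedDirDeriv_append,
    iteratedDirDeriv_map_add a b hv]
  refine Finset.sum_congr rfl fun T _ => ?_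
  have hlength : ((List.finRange l.length).filter (· ∈ T)).length +
      ((List.finRange l.length).filter (· ∉ T)).length = l.length :=
    (length_filter_add_length_filter_not (· ∈ T) _).trans List.length_finRange
  rw [← iteratedDirDeriv_append, List.append_assoc v, iteratedDirDeriv_perm List.perm_append_comm]
  simpa [← hlength, add_comm, add_left_comm, add_assoc] using hf

end Symmetric

end IteratedDirDeriv

section Cumulants

variable {χ : ℕ} {F f g : (Fin χ → ℝ) → (Fin χ → ℝ) → ℝ}

/-- The direction of the counting parameter `λ_i` in the space of pairs `(λ, A)`. -/
def countingDir (i : Fin χ) : (Fin χ → ℝ) × (Fin χ → ℝ) :=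
  (Pi.single i 1, 0)

/-- The direction of the affinity `A_i` in the space of pairs `(λ, A)`. -/
def affinityDir (i : Fin χ) : (Fin χ → ℝ) × (Fin χ → ℝ) :=
  (0, Pi.single i 1)

/-- The mixed partial derivative of `F` in the counting parameters `α` and the affinities `β`, as a
function of `(λ, A)`; its value at the origin is `Dmix α β F`. -/
noncomputable def mixedPDeriv (α β : List (Fin χ)) (F : (Fin χ → ℝ) → (Fin χ → ℝ) → ℝ) :
    (Fin χ → ℝ) → (Fin χ → ℝ) → ℝ :=
  List.foldr pderivLam (List.foldr pderivAff F β) α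

theorem Dmix_eq_mixedPDeriv (α β : List (Fin χ)) (F : (Fin χ → ℝ) → (Fin χ → ℝ) → ℝ) :
    Dmix α β F = mixedPDeriv α β F 0 0 :=
  rfl

/-- The substitution `(λ, A) ↦ (A - λ, A)` of the fluctuation relation, as a linear map. -/
def fluctuationMap (χ : ℕ) : (Fin χ → ℝ) × (Fin χ → ℝ) →L[ℝ] (Fin χ → ℝ) × (Fin χ → ℝ) :=
  ContinuousLinearMap.prod (.snd ℝ _ _ - .fst ℝ _ _) (.snd ℝ _ _)

theorem fluctuationMap_apply (p : (Fin χ → ℝ) × (Fin χ → ℝ)) :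
    fluctuationMap χ p = (p.2 - p.1, p.2) :=
  rfl

theorem fluctuationMap_countingDir (i : Fin χ) :
    fluctuationMap χ (countingDir i) = -countingDir i := by
  simp [fluctuationMap_apply, countingDir]

theorem fluctuationMap_affinityDir (i : Fin χ) :
    fluctuationMap χ (affinityDir i) = countingDir i + affinityDir i := by
  simp [fluctuationMap_apply, countingDir, affinityDir]

theorem uncurry_pderivLam (hF : Differentiable ℝ (Function.uncurry F)) (i : Fin χ) :
    Function.uncurry (pderivLam i F) =
      fun p => fderiv ℝ (Function.uncurry F) p (countingDir i) := by
  funext ⟨l, a⟩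
  have h : HasFDerivAt (fun l' => F l' a) _ l :=
    HasFDerivAt.comp (g := Function.uncurry F) (f := fun l' => (l', a)) l
      (hF (l, a)).hasFDerivAt (hasFDerivAt_prodMk_left l a)
  simp [pderivLam, h.fderiv, countingDir]

theorem uncurry_pderivAff (hF : Differentiable ℝ (Function.uncurry F)) (i : Fin χ) :
    Function.uncurry (pderivAff i F) =
      fun p => fderiv ℝ (Function.uncurry F) p (affinityDir i) := by
  funext ⟨l, a⟩
  have h : HasFDerivAt (fun a' => F l a') _ a :=
    HasFDerivAt.comp (g := Function.uncurry F) (f := fun a' => (l, a')) a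
      (hF (l, a)).hasFDerivAt (hasFDerivAt_prodMk_right l a)
  simp [pderivAff, h.fderiv, affinityDir]

theorem uncurry_foldr_pderivLam {α : List (Fin χ)}
    (hF : ContDiff ℝ α.length (Function.uncurry F)) :
    Function.uncurry (List.foldr pderivLam F α) =
      iteratedDirDeriv ℝ (α.map countingDir) (Function.uncurry F) := by
  induction α with
  | nil => rfl
  | cons i α ih =>
    have hα := ih (hF.of_le (by simp))
    have hd : Differentiable ℝ (Function.uncurry (List.foldr pderivLam F α)) :=
      hα ▸ differentiable_iteratedDirDeriv (by simpa using hF)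
    rw [List.foldr_cons, uncurry_pderivLam hd, hα, List.map_cons, iteratedDirDeriv_cons]

theorem uncurry_foldr_pderivAff {β : List (Fin χ)}
    (hF : ContDiff ℝ β.length (Function.uncurry F)) :
    Function.uncurry (List.foldr pderivAff F β) =
      iteratedDirDeriv ℝ (β.map affinityDir) (Function.uncurry F) := by
  induction β with
  | nil => rfl
  | cons i β ih =>
    have hβ := ih (hF.of_le (by simp))
    have hd : Differentiable ℝ (Function.uncurry (List.foldr pderivAff F β)) :=
      hβ ▸ differentiable_iteratedDirDeriv (by simpa using hF)
    rw [List.foldr_cons, uncurry_pderivAff hd, hβ, List.map_cons, iteratedDirDeriv_cons]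

theorem mixedPDeriv_apply {α β : List (Fin χ)}
    (hF : ContDiff ℝ (α.length + β.length : ℕ) (Function.uncurry F)) (l A : Fin χ → ℝ) :
    mixedPDeriv α β F l A =
      iteratedDirDeriv ℝ (α.map countingDir ++ β.map affinityDir) (Function.uncurry F) (l, A) := by
  have hβ : Function.uncurry (List.foldr pderivAff F β) =
      iteratedDirDeriv ℝ (β.map affinityDir) (Function.uncurry F) :=
    uncurry_foldr_pderivAff (hF.of_le (by simp))
  have hα : ContDiff ℝ α.length (Function.uncurry (List.foldr pderivAff F β)) :=
    hβ ▸ contDiff_iteratedDirDeriv (by simpa using hF)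
  rw [iteratedDirDeriv_append, ← hβ, ← uncurry_foldr_pderivLam hα]
  rfl

theorem iteratedDirDeriv_comp_fluctuationMap {G : (Fin χ → ℝ) × (Fin χ → ℝ) → ℝ}
    {α β : List (Fin χ)} (hG : ContDiff ℝ (α.length + β.length : ℕ) G) :
    iteratedDirDeriv ℝ (α.map countingDir ++ β.map affinityDir) (G ∘ fluctuationMap χ) =
      (-1 : ℝ) ^ α.length •
        iteratedDirDeriv ℝ
          (α.map countingDir ++ β.map fun i => countingDir i + affinityDir i) G ∘
          fluctuationMap χ := by
  have hα : (α.map countingDir).map (fluctuationMap χ) =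
      (α.map countingDir).map ((-1 : ℝ) • ·) := by
    simp [fluctuationMap_countingDir]
  have hβ : (β.map affinityDir).map (fluctuationMap χ) =
      β.map fun i => countingDir i + affinityDir i := by
    simp [fluctuationMap_affinityDir]
  rw [iteratedDirDeriv_comp_continuousLinearMap _ (by simpa using hG), List.map_append, hα, hβ,
    iteratedDirDeriv_append, iteratedDirDeriv_map_smul, ← iteratedDirDeriv_append, List.length_map]
  rfl

theorem general_relation_cumulants_responses_general {α β : List (Fin χ)}
    (hg : ContDiff ℝ (α.length + β.length : ℕ) (Function.uncurry g))
    (hFR : ∀ l A : Fin χ → ℝ, f l A = g (A - l) A) (l A : Fin χ → ℝ) :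
    mixedPDeriv α β f l A =
      (-1 : ℝ) ^ α.length *
        ∑ T : Finset (Fin β.length),
          mixedPDeriv (α ++ ((List.finRange β.length).filter (· ∈ T)).map β.get)
            (((List.finRange β.length).filter (· ∉ T)).map β.get) g (A - l) A := by
  have hfg : Function.uncurry f = Function.uncurry g ∘ fluctuationMap χ :=
    funext fun p => hFR p.1 p.2
  have hf : ContDiff ℝ (α.length + β.length : ℕ) (Function.uncurry f) :=
    hfg ▸ hg.comp (fluctuationMap χ).contDiff
  rw [mixedPDeriv_apply hf, hfg, iteratedDirDeriv_comp_fluctuationMap hg, Pi.smul_apply,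
    smul_eq_mul, Function.comp_apply, fluctuationMap_apply,
    iteratedDirDeriv_append_map_add _ _ (by simpa using hg)]
  congr 1
  refine Finset.sum_congr rfl fun T _ => ?_
  have hlength : ((List.finRange β.length).filter (· ∈ T)).length +
      ((List.finRange β.length).filter (· ∉ T)).length = β.length :=
    (length_filter_add_length_filter_not (· ∈ T) _).trans List.length_finRange
  rw [mixedPDeriv_apply, List.map_append]
  simpa [← hlength, add_assoc] using hg

end Cumulants

/-- The fluctuation relation implies the general relation between cumulants and their
responses: `D[α; β] f = (−1)^m Σ_{T ⊆ {1,…,n}} D[α ++ β|_T ; β|_{Tᶜ}] g`. -/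
theorem general_relation_cumulants_responses {χ : ℕ} (hχ : 1 ≤ χ)
    (f g : (Fin χ → ℝ) → (Fin χ → ℝ) → ℝ)
    (hf : ContDiff ℝ (⊤ : ℕ∞) (Function.uncurry f))
    (hg : ContDiff ℝ (⊤ : ℕ∞) (Function.uncurry g))
    (hFR : ∀ l A : Fin χ → ℝ, f l A = g (A - l) A)
    (α β : List (Fin χ)) :
    Dmix α β f =
      (-1 : ℝ) ^ α.length *
        ∑ T : Finset (Fin β.length),
          Dmix (α ++ ((List.finRange β.length).filter (· ∈ T)).map β.get)
            (((List.finRange β.length).filter (· ∉ T)).map β.get) g := by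
  simpa only [Dmix_eq_mixedPDeriv, sub_zero] using
    general_relation_cumulants_responses_general (hg.of_le (mod_cast le_top)) hFR 0 0
end

section
/- For every m : ℕ and every list α = (α₁, …, α_m) of elements of Fin χ, the equilibrium cumulants satisfy the parity relation D[α; ∅] f = (−1)^m · D[α; ∅] g; that is, the m-th statistical cumulant at zero affinity is even in the magnetic field when m is even and odd in the magnetic field when m is odd. -/
/-! At zero affinity the fluctuation relation says that `f` is `g` precomposed with `λ ↦ -λ`, and
the cumulants are the values of the iterated Fréchet derivative at `λ = 0` on basis vectors. An
`m`-linear form changes by `(-1)^m` when all its arguments change sign. -/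

theorem iteratedFDeriv_comp_neg_apply {𝕜 E F : Type*} [NontriviallyNormedField 𝕜]
    [NormedAddCommGroup E] [NormedSpace 𝕜 E] [NormedAddCommGroup F] [NormedSpace 𝕜 F]
    (n : ℕ) (f : E → F) (x : E) (v : Fin n → E) :
    iteratedFDeriv 𝕜 n (fun y => f (-y)) x v = (-1 : 𝕜) ^ n • iteratedFDeriv 𝕜 n f (-x) v := by
  have comp_neg : iteratedFDeriv 𝕜 n (fun y => f (-y)) x v =
      iteratedFDeriv 𝕜 n f (-x) fun i => -v i := by
    simpa [iteratedFDerivWithin_univ, Function.comp_def] using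
      DFunLike.congr_fun ((ContinuousLinearEquiv.neg 𝕜).iteratedFDerivWithin_comp_right f
        uniqueDiffOn_univ (Set.mem_univ _) n) v
  simpa [comp_neg] using (iteratedFDeriv 𝕜 n f (-x)).map_smul_univ (fun _ => (-1 : 𝕜)) v

section CountingParameter

variable {χ : ℕ} {F : (Fin χ → ℝ) → (Fin χ → ℝ) → ℝ}

theorem foldr_pderivLam_eq_iteratedFDeriv {α : List (Fin χ)} {a : Fin χ → ℝ}
    (hF : ContDiff ℝ α.length fun l => F l a) (l : Fin χ → ℝ) :
    α.foldr pderivLam F l a =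
      iteratedFDeriv ℝ α.length (fun l' => F l' a) l fun k => Pi.single (α.get k) 1 := by
  induction α generalizing l with
  | nil => simp
  | cons i α ih =>
    have hlt : (α.length : WithTop ℕ∞) < (i :: α).length := mod_cast α.length.lt_succ_self
    simp only [List.foldr_cons, pderivLam, ih (hF.of_le hlt.le)]
    exact ((hF.differentiable_iteratedFDeriv hlt l).iteratedFDeriv_succ_apply_left'
      (m := fun k => Pi.single ((i :: α).get k) 1)).symm

theorem Dmix_nil_eq_iteratedFDeriv {α : List (Fin χ)}
    (hF : ContDiff ℝ α.length fun l => F l 0) :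
    Dmix α [] F =
      iteratedFDeriv ℝ α.length (fun l => F l 0) 0 fun k => Pi.single (α.get k) 1 :=
  foldr_pderivLam_eq_iteratedFDeriv hF 0

theorem parity_of_cumulants_general {f g : (Fin χ → ℝ) → (Fin χ → ℝ) → ℝ} {α : List (Fin χ)}
    (hg : ContDiff ℝ α.length fun l => g l 0) (hFR : ∀ l, f l 0 = g (-l) 0) :
    Dmix α [] f = (-1 : ℝ) ^ α.length * Dmix α [] g := by
  have hf : ContDiff ℝ α.length fun l => f l 0 := by
    simpa only [hFR, Function.comp_def] using hg.comp contDiff_neg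
  rw [Dmix_nil_eq_iteratedFDeriv hf, Dmix_nil_eq_iteratedFDeriv hg]
  simpa only [hFR, neg_zero, smul_eq_mul] using
    iteratedFDeriv_comp_neg_apply (𝕜 := ℝ) α.length (fun l => g l 0) 0 _

end CountingParameter

/-- Parity of the equilibrium cumulants: `D[α; ∅] f = (−1)^m D[α; ∅] g`. -/
theorem parity_of_cumulants {χ : ℕ} (hχ : 1 ≤ χ)
    (f g : (Fin χ → ℝ) → (Fin χ → ℝ) → ℝ)
    (hf : ContDiff ℝ (⊤ : ℕ∞) (Function.uncurry f))
    (hg : ContDiff ℝ (⊤ : ℕ∞) (Function.uncurry g))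
    (hFR : ∀ l A : Fin χ → ℝ, f l A = g (A - l) A)
    (α : List (Fin χ)) :
    Dmix α [] f = (-1 : ℝ) ^ α.length * Dmix α [] g := by
  have hg₀ : ContDiff ℝ α.length fun l => g l 0 :=
    (hg.comp (contDiff_prodMk_left 0)).of_le (mod_cast le_top)
  exact parity_of_cumulants_general hg₀ fun l => by simpa using hFR l 0
end

section
/- For all α, β : Fin χ, the first response coefficients and the second cumulants at equilibrium satisfy D[(α); (β)] f + D[(α); (β)] g = − D[(α, β); ∅] f; that is, the sum of the first response coefficient at B and at −B equals minus the equilibrium second cumulant. -/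
/-!
At zero affinity the fluctuation relation reads `f (λ, 0) = g (-λ, 0)`, so `f` and `g` have the same
second cumulants, the second derivative being even under reflection. Differentiating
`f (λ, A) = g (A - λ, A)` in `A` at `A = 0` instead produces both partial derivatives of `g` at
`(-λ, 0)`; a further `λ`-derivative at `0` reverses their sign, giving minus the second cumulant of
`g` from the first slot and minus its first response coefficient from the second.
-/

section Calculus

variable {𝕜 D E F G : Type*} [NontriviallyNormedField 𝕜]
  [NormedAddCommGroup D] [NormedSpace 𝕜 D] [NormedAddCommGroup E] [NormedSpace 𝕜 E]
  [NormedAddCommGroup F] [NormedSpace 𝕜 F] [NormedAddCommGroup G] [NormedSpace 𝕜 G]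

theorem fderiv_comp_neg_apply (f : E → F) (x v : E) :
    fderiv 𝕜 (fun y ↦ f (-y)) x v = -fderiv 𝕜 f (-x) v := by
  have chain := (ContinuousLinearEquiv.neg 𝕜 (M := E)).comp_right_fderiv (f := f) (x := x)
  simpa [Function.comp_def] using DFunLike.congr_fun chain v

theorem fderiv_fderiv_comp_neg_apply (f : E → F) (x u v : E) :
    fderiv 𝕜 (fun y ↦ fderiv 𝕜 (fun z ↦ f (-z)) y v) x u =
      fderiv 𝕜 (fun y ↦ fderiv 𝕜 f y v) (-x) u := by
  simp only [fderiv_comp_neg_apply f, fderiv_fun_neg, neg_apply,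
    fderiv_comp_neg_apply fun y ↦ fderiv 𝕜 f y v, neg_neg]

theorem fderiv_comp_pair {f : E → F → G} {φ : D → E} {ψ : D → F} {x : D}
    (hf : DifferentiableAt 𝕜 (Function.uncurry f) (φ x, ψ x))
    (hφ : DifferentiableAt 𝕜 φ x) (hψ : DifferentiableAt 𝕜 ψ x) :
    fderiv 𝕜 (fun y ↦ f (φ y) (ψ y)) x =
      fderiv 𝕜 (fun e ↦ f e (ψ x)) (φ x) ∘L fderiv 𝕜 φ x +
        fderiv 𝕜 (f (φ x)) (ψ x) ∘L fderiv 𝕜 ψ x := by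
  have hfst := (hf.hasFDerivAt.comp (f := fun e ↦ (e, ψ x)) (φ x)
    (hasFDerivAt_prodMk_left _ _)).fderiv
  have hsnd := (hf.hasFDerivAt.comp (f := fun e ↦ (φ x, e)) (ψ x)
    (hasFDerivAt_prodMk_right _ _)).fderiv
  have hpair := (hf.hasFDerivAt.comp x (hφ.hasFDerivAt.prodMk hψ.hasFDerivAt)).fderiv
  simp only [Function.comp_def, Function.uncurry_apply_pair] at hfst hsnd hpair
  rw [hfst, hsnd, hpair]
  ext w
  simp [← map_add]

end Calculus

section FluctuationRelation

variable {𝕜 E F : Type*} [NontriviallyNormedField 𝕜] [NormedAddCommGroup E] [NormedSpace 𝕜 E]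
  [NormedAddCommGroup F] [NormedSpace 𝕜 F] {f g : E → E → F}

variable (𝕜) in
/-- The equilibrium second cumulant of a generating function `Q (λ, A)` in the directions `u`, `v`:
its second derivative in the counting parameter `λ` at `(0, 0)`. -/
noncomputable def secondCumulant (Q : E → E → F) (u v : E) : F :=
  fderiv 𝕜 (fun l ↦ fderiv 𝕜 (fun l' ↦ Q l' 0) l v) 0 u

variable (𝕜) in
/-- The first response coefficient of a generating function `Q (λ, A)`: the response of the mean
current along `u` to an affinity along `v`. It is the mixed derivative at `(0, 0)`, taken first in
`A` and then in `λ`. -/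
noncomputable def firstResponse (Q : E → E → F) (u v : E) : F :=
  fderiv 𝕜 (fun l ↦ fderiv 𝕜 (Q l) 0 v) 0 u

theorem secondCumulant_eq_of_fluctuation (hFR : ∀ l A, f l A = g (A - l) A) (u v : E) :
    secondCumulant 𝕜 f u v = secondCumulant 𝕜 g u v := by
  simp only [secondCumulant, hFR, zero_sub, fderiv_fderiv_comp_neg_apply fun l ↦ g l 0, neg_zero]

theorem fderiv_affinity_of_fluctuation (hg : Differentiable 𝕜 (Function.uncurry g))
    (hFR : ∀ l A, f l A = g (A - l) A) (l A v : E) :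
    fderiv 𝕜 (f l) A v = fderiv 𝕜 (fun l' ↦ g l' A) (A - l) v + fderiv 𝕜 (g (A - l)) A v := by
  have chain := fderiv_comp_pair (φ := fun A' ↦ A' - l) (ψ := fun A' ↦ A') (x := A) (hg _)
    (by fun_prop) (by fun_prop)
  rw [funext (hFR l), chain]
  simp [fderiv_sub_const]

theorem firstResponse_eq_of_fluctuation (hg : ContDiff 𝕜 2 (Function.uncurry g))
    (hFR : ∀ l A, f l A = g (A - l) A) (u v : E) :
    firstResponse 𝕜 f u v = -(secondCumulant 𝕜 g u v + firstResponse 𝕜 g u v) := by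
  have hcount : Differentiable 𝕜 fun l ↦ fderiv 𝕜 (fun l' ↦ g l' 0) l v :=
    have hg₀ : ContDiff 𝕜 2 fun l ↦ g l 0 := hg.comp (contDiff_prodMk_left 0)
    ((hg₀.fderiv_right (m := 1) one_add_one_eq_two.le).clm_apply contDiff_const).differentiable
      one_ne_zero
  have haff : Differentiable 𝕜 fun l ↦ fderiv 𝕜 (g l) 0 v :=
    ((hg.fderiv (n := 1) contDiff_const one_add_one_eq_two.le).clm_apply
      contDiff_const).differentiable one_ne_zero
  calc firstResponse 𝕜 f u v
      = fderiv 𝕜 (fun l ↦ fderiv 𝕜 (fun l' ↦ g l' 0) (-l) v + fderiv 𝕜 (g (-l)) 0 v) 0 u := by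
        simp only [firstResponse,
          fderiv_affinity_of_fluctuation (hg.differentiable two_ne_zero) hFR, zero_sub]
    _ = -fderiv 𝕜 (fun l ↦ fderiv 𝕜 (fun l' ↦ g l' 0) l v + fderiv 𝕜 (g l) 0 v) 0 u := by
        rw [fderiv_comp_neg_apply fun l ↦ fderiv 𝕜 (fun l' ↦ g l' 0) l v + fderiv 𝕜 (g l) 0 v,
          neg_zero]
    _ = -(secondCumulant 𝕜 g u v + firstResponse 𝕜 g u v) := by
        rw [fderiv_fun_add (hcount 0) (haff 0), add_apply, secondCumulant, firstResponse]

theorem first_response_from_second_cumulant_general (hg : ContDiff 𝕜 2 (Function.uncurry g))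
    (hFR : ∀ l A, f l A = g (A - l) A) (u v : E) :
    firstResponse 𝕜 f u v + firstResponse 𝕜 g u v = -secondCumulant 𝕜 f u v := by
  rw [firstResponse_eq_of_fluctuation hg hFR, secondCumulant_eq_of_fluctuation hFR]
  abel

end FluctuationRelation

/-- `Q_{α,β}(B) + Q_{α,β}(−B) = − Q_{αβ}(0; B)`. -/
theorem first_response_from_second_cumulant {χ : ℕ} (hχ : 1 ≤ χ)
    (f g : (Fin χ → ℝ) → (Fin χ → ℝ) → ℝ)
    (hf : ContDiff ℝ (⊤ : ℕ∞) (Function.uncurry f))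
    (hg : ContDiff ℝ (⊤ : ℕ∞) (Function.uncurry g))
    (hFR : ∀ l A : Fin χ → ℝ, f l A = g (A - l) A)
    (α β : Fin χ) :
    Dmix [α] [β] f + Dmix [α] [β] g = - Dmix [α, β] [] f :=
  first_response_from_second_cumulant_general (hg.of_le (by norm_cast)) hFR
    (Pi.single α 1) (Pi.single β 1)
end

section
/- For all α, β, γ : Fin χ, the first response of the second cumulants satisfies D[(α, β); (γ)] f − D[(α, β); (γ)] g = − D[(α, β, γ); ∅] f; that is, the difference of the first response of the second cumulant at B and at −B equals minus the equilibrium third cumulant. -/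
/-!
Translating `λ` and `A` by the same vector leaves `A - λ` unchanged, so differentiating
`g (A - λ) A = f λ A` along the diagonal direction `(e, e)` only sees the second argument of `g`:
`∂g/∂A` is the reflection of `∂f/∂λ + ∂f/∂A` under `λ ↦ A - λ`. Each further `λ`-derivative commutes
with the reflection up to a sign, and the reflection fixes the point `(0, 0)`.
-/

/-- The substitution `λ ↦ A - λ` at fixed affinities `A`. The fluctuation relation says that it
exchanges the generating functions in the fields `B` and `-B`. -/
def reflectLam {χ : ℕ} (F : (Fin χ → ℝ) → (Fin χ → ℝ) → ℝ) :
    (Fin χ → ℝ) → (Fin χ → ℝ) → ℝ :=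
  fun l a => F (a - l) a

section PartialDerivatives

variable {χ : ℕ} {F G : (Fin χ → ℝ) → (Fin χ → ℝ) → ℝ}

lemma pderivLam_eq_fderiv_uncurry (i : Fin χ) {l a : Fin χ → ℝ}
    (hF : DifferentiableAt ℝ (Function.uncurry F) (l, a)) :
    pderivLam i F l a = fderiv ℝ (Function.uncurry F) (l, a) (Pi.single i 1, 0) := by
  have chain := hF.hasFDerivAt.comp (f := fun l' => (l', a)) l (hasFDerivAt_prodMk_left l a)
  exact DFunLike.congr_fun chain.fderiv (Pi.single i 1)

lemma pderivAff_eq_fderiv_uncurry (i : Fin χ) {l a : Fin χ → ℝ}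
    (hF : DifferentiableAt ℝ (Function.uncurry F) (l, a)) :
    pderivAff i F l a = fderiv ℝ (Function.uncurry F) (l, a) (0, Pi.single i 1) := by
  have chain := hF.hasFDerivAt.comp (f := fun a' => (l, a')) a (hasFDerivAt_prodMk_right l a)
  exact DFunLike.congr_fun chain.fderiv (Pi.single i 1)

lemma contDiff_pderivLam {n : WithTop ℕ∞} (i : Fin χ)
    (hF : ContDiff ℝ (n + 1) (Function.uncurry F)) :
    ContDiff ℝ n (Function.uncurry (pderivLam i F)) := by
  have hpderiv : Function.uncurry (pderivLam i F) =
      fun p => fderiv ℝ (Function.uncurry F) p (Pi.single i 1, 0) :=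
    funext fun p => pderivLam_eq_fderiv_uncurry i (hF.differentiable (by simp) p)
  rw [hpderiv]
  exact (hF.fderiv_right le_rfl).clm_apply contDiff_const

lemma contDiff_pderivAff {n : WithTop ℕ∞} (i : Fin χ)
    (hF : ContDiff ℝ (n + 1) (Function.uncurry F)) :
    ContDiff ℝ n (Function.uncurry (pderivAff i F)) := by
  have hpderiv : Function.uncurry (pderivAff i F) =
      fun p => fderiv ℝ (Function.uncurry F) p (0, Pi.single i 1) :=
    funext fun p => pderivAff_eq_fderiv_uncurry i (hF.differentiable (by simp) p)
  rw [hpderiv]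
  exact (hF.fderiv_right le_rfl).clm_apply contDiff_const

lemma contDiff_foldr_pderivLam {n : WithTop ℕ∞} (α : List (Fin χ))
    (hF : ContDiff ℝ (α.length + n) (Function.uncurry F)) :
    ContDiff ℝ n (Function.uncurry (α.foldr pderivLam F)) := by
  induction α generalizing n with
  | nil => simpa using hF
  | cons i α ih =>
    refine contDiff_pderivLam i (ih ?_)
    simpa [add_comm, add_left_comm] using hF

lemma pderivLam_add (i : Fin χ) (hF : Differentiable ℝ (Function.uncurry F))
    (hG : Differentiable ℝ (Function.uncurry G)) :
    pderivLam i (F + G) = pderivLam i F + pderivLam i G := by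
  funext l a
  have hF' : DifferentiableAt ℝ (fun l' => F l' a) l := by fun_prop
  have hG' : DifferentiableAt ℝ (fun l' => G l' a) l := by fun_prop
  exact DFunLike.congr_fun (fderiv_add hF' hG') (Pi.single i 1)

lemma foldr_pderivLam_add (α : List (Fin χ))
    (hF : ContDiff ℝ α.length (Function.uncurry F))
    (hG : ContDiff ℝ α.length (Function.uncurry G)) :
    α.foldr pderivLam (F + G) = α.foldr pderivLam F + α.foldr pderivLam G := by
  induction α with
  | nil => rfl
  | cons i α ih =>
    rw [List.length_cons, Nat.cast_add_one] at hF hG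
    simp only [List.foldr_cons]
    rw [ih (hF.of_le le_self_add) (hG.of_le le_self_add)]
    exact pderivLam_add i
      ((contDiff_foldr_pderivLam α hF).differentiable one_ne_zero)
      ((contDiff_foldr_pderivLam α hG).differentiable one_ne_zero)

lemma pderivLam_const_smul (i : Fin χ) (c : ℝ) (F : (Fin χ → ℝ) → (Fin χ → ℝ) → ℝ) :
    pderivLam i (c • F) = c • pderivLam i F := by
  funext l a
  exact DFunLike.congr_fun
    (congrFun (fderiv_const_smul_field (f := fun l' => F l' a) c) l) (Pi.single i 1)

end PartialDerivatives

section Reflection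

lemma fderiv_comp_const_sub {𝕜 E F : Type*} [NontriviallyNormedField 𝕜]
    [NormedAddCommGroup E] [NormedSpace 𝕜 E] [NormedAddCommGroup F] [NormedSpace 𝕜 F]
    (f : E → F) (c x : E) :
    fderiv 𝕜 (fun y => f (c - y)) x = -fderiv 𝕜 f (c - x) :=
  calc
    fderiv 𝕜 (fun y => f (c - y)) x = fderiv 𝕜 (fun y => f (c + (-1 : 𝕜) • y)) x := by
      simp [sub_eq_add_neg]
    _ = (-1 : 𝕜) • fderiv 𝕜 (fun y => f (c + y)) ((-1 : 𝕜) • x) :=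
      fderiv_comp_smul (f := fun y => f (c + y)) (-1 : 𝕜)
    _ = -fderiv 𝕜 f (c - x) := by simp [fderiv_comp_add_left, sub_eq_add_neg]

variable {χ : ℕ}

lemma pderivLam_reflectLam (i : Fin χ) (F : (Fin χ → ℝ) → (Fin χ → ℝ) → ℝ) :
    pderivLam i (reflectLam F) = -reflectLam (pderivLam i F) := by
  funext l a
  exact DFunLike.congr_fun (fderiv_comp_const_sub (fun l' => F l' a) a l) (Pi.single i 1)

lemma foldr_pderivLam_reflectLam (α : List (Fin χ)) (F : (Fin χ → ℝ) → (Fin χ → ℝ) → ℝ) :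
    α.foldr pderivLam (reflectLam F) =
      (-1 : ℝ) ^ α.length • reflectLam (α.foldr pderivLam F) := by
  induction α with
  | nil => simp
  | cons i α ih =>
    simp [ih, pderivLam_const_smul, pderivLam_reflectLam, pow_succ]

lemma pderivAff_reflectLam (i : Fin χ) {F : (Fin χ → ℝ) → (Fin χ → ℝ) → ℝ}
    (hF : Differentiable ℝ (Function.uncurry F)) :
    pderivAff i (reflectLam F) = reflectLam (pderivLam i F + pderivAff i F) := by
  funext l a
  let e : Fin χ → ℝ := Pi.single i 1
  let F' := fderiv ℝ (Function.uncurry F) (a - l, a)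
  have chain := (hF (a - l, a)).hasFDerivAt.comp (f := fun a' => (a' - l, a')) a
    (((hasFDerivAt_id a).sub_const l).prodMk (hasFDerivAt_id a))
  calc
    pderivAff i (reflectLam F) l a = F' (e, e) := DFunLike.congr_fun chain.fderiv e
    _ = F' (e, 0) + F' (0, e) := by simp [← map_add]
    _ = pderivLam i F (a - l) a + pderivAff i F (a - l) a := by
      rw [pderivLam_eq_fderiv_uncurry i (hF _), pderivAff_eq_fderiv_uncurry i (hF _)]

lemma eq_reflectLam_of_fluctuation_relation {f g : (Fin χ → ℝ) → (Fin χ → ℝ) → ℝ}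
    (hFR : ∀ l A : Fin χ → ℝ, f l A = g (A - l) A) : g = reflectLam f := by
  funext l A
  simp [reflectLam, hFR]

lemma Dmix_reflectLam_singleton (α : List (Fin χ)) (γ : Fin χ)
    {F : (Fin χ → ℝ) → (Fin χ → ℝ) → ℝ}
    (hF : ContDiff ℝ (α.length + 1) (Function.uncurry F)) :
    Dmix α [γ] (reflectLam F) =
      (-1) ^ α.length * (Dmix (α ++ [γ]) [] F + Dmix α [γ] F) := by
  have diagonal : pderivAff γ (reflectLam F) = reflectLam (pderivLam γ F + pderivAff γ F) :=
    pderivAff_reflectLam γ (hF.differentiable (by simp))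
  have additive : α.foldr pderivLam (pderivLam γ F + pderivAff γ F) =
      α.foldr pderivLam (pderivLam γ F) + α.foldr pderivLam (pderivAff γ F) :=
    foldr_pderivLam_add α (contDiff_pderivLam γ hF) (contDiff_pderivAff γ hF)
  simp [Dmix, diagonal, foldr_pderivLam_reflectLam, additive, reflectLam]

end Reflection

theorem response_second_cumulant_from_third_cumulant_general {χ : ℕ}
    (f g : (Fin χ → ℝ) → (Fin χ → ℝ) → ℝ) (α : List (Fin χ)) (γ : Fin χ)
    (hf : ContDiff ℝ (α.length + 1) (Function.uncurry f))
    (hFR : ∀ l A : Fin χ → ℝ, f l A = g (A - l) A) :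
    Dmix α [γ] f - (-1) ^ α.length * Dmix α [γ] g = -Dmix (α ++ [γ]) [] f := by
  rw [eq_reflectLam_of_fluctuation_relation hFR, Dmix_reflectLam_singleton α γ hf,
    ← mul_assoc, ← mul_pow]
  norm_num

/-- `Q_{αβ,γ}(B) − Q_{αβ,γ}(−B) = − Q_{αβγ}(0; B)`. -/
theorem response_second_cumulant_from_third_cumulant {χ : ℕ} (hχ : 1 ≤ χ)
    (f g : (Fin χ → ℝ) → (Fin χ → ℝ) → ℝ)
    (hf : ContDiff ℝ (⊤ : ℕ∞) (Function.uncurry f))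
    (hg : ContDiff ℝ (⊤ : ℕ∞) (Function.uncurry g))
    (hFR : ∀ l A : Fin χ → ℝ, f l A = g (A - l) A)
    (α β γ : Fin χ) :
    Dmix [α, β] [γ] f - Dmix [α, β] [γ] g = - Dmix [α, β, γ] [] f := by
  simpa using response_second_cumulant_from_third_cumulant_general f g [α, β] γ
    (hf.of_le (mod_cast le_top)) hFR
end

section
/- (Theorem 1, antisymmetric relations.) If Q satisfies the even-m relations, i.e. for every S ⊆ Fin N with |S| even one has Q(S) = −(1/2) · Σ_{T ⊆ Sᶜ, T ≠ ∅} Q(S ∪ T), then Q also satisfies the odd-m relations: for every S ⊆ Fin N with |S| odd, Σ_{T ⊆ Sᶜ, T ≠ ∅} Q(S ∪ T) = 0. -/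
/-!
The Möbius function of a Boolean lattice is `(-1) ^ |T \ S| = (-1) ^ |S| * (-1) ^ |T|`. Hence, with
`ε S = (-1) ^ |S|`, the operator sending `f` to `S ↦ ∑ U ⊇ S, ε U * f U` is an involution. It maps
`ε * Q` to the superset sums `P` of `Q` and so fixes `G = P + ε * Q`, whose value at `S` vanishes
exactly when the relation at `S` holds, whatever the parity of `|S|`. At an odd `S`, being a fixed
point reads `2 * G S = ∑ U ⊋ S, ε U * G U`, so if `G` vanishes at all even sets, then `G = 0` by
downward induction. Only the sign-product form of the Möbius function matters, as in any Eulerian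
poset.
-/

section EulerianSign

open Finset

/-- A sign function on a locally finite order whose sum over every nontrivial closed interval is
zero. For a graded order and `ε x = (-1) ^ rank x`, this says that the order is Eulerian. The signs
are units of `ℤ`, so that they act on any additive commutative group. -/
def IsEulerianSign {α : Type*} [PartialOrder α] [LocallyFiniteOrder α] (ε : α → ℤˣ) : Prop :=
  ∀ ⦃x y : α⦄, x < y → ∑ z ∈ Icc x y, (ε z : ℤ) = 0

variable {α M : Type*} [PartialOrder α] [LocallyFiniteOrderTop α] [AddCommGroup M] {ε : α → ℤˣ}

theorem eq_zero_of_sum_Ici_smul_eq_self (h2 : IsSMulRegular M (2 : ℕ)) {g : α → M}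
    (hfix : ∀ x, ∑ y ∈ Ici x, ε y • g y = g x) (hg : ∀ x, ε x = 1 → g x = 0) (x : α) :
    g x = 0 := by
  induction x using (measure fun x : α ↦ #(Ici x)).wf.induction with
  | h x ih =>
    rcases Int.units_eq_one_or (ε x) with hx | hx
    · exact hg x hx
    · have hIoi : ∑ y ∈ Ioi x, ε y • g y = 0 := sum_eq_zero fun y hy ↦ by
        rw [ih y (card_lt_card (Ici_ssubset_Ici.2 (mem_Ioi.1 hy))), smul_zero]
      have hneg : -g x = g x := by
        simpa only [← add_sum_Ioi_eq_sum_Ici, hIoi, hx, Units.neg_smul, one_smul, add_zero]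
          using hfix x
      refine h2.right_eq_zero_of_smul ?_
      rw [two_nsmul, ← neg_eq_iff_add_eq_zero, hneg]

/-- The discrepancy at `x` in the relations for `Q`: it is `2 • Q x + ∑ y > x, Q y` where `ε x = 1`
and `∑ y > x, Q y` where `ε x = -1`. -/
def relationDefect (ε : α → ℤˣ) (Q : α → M) (x : α) : M :=
  ∑ y ∈ Ici x, Q y + ε x • Q x

theorem relationDefect_of_eq_one (Q : α → M) {x : α} (hx : ε x = 1) :
    relationDefect ε Q x = 2 • Q x + ∑ y ∈ Ioi x, Q y := by
  rw [relationDefect, ← add_sum_Ioi_eq_sum_Ici, hx, one_smul, two_nsmul]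
  abel

theorem relationDefect_of_eq_neg_one (Q : α → M) {x : α} (hx : ε x = -1) :
    relationDefect ε Q x = ∑ y ∈ Ioi x, Q y := by
  rw [relationDefect, ← add_sum_Ioi_eq_sum_Ici, hx, Units.neg_smul, one_smul]
  abel

variable [LocallyFiniteOrder α]

theorem IsEulerianSign.sum_Ici_smul_sum_Ici (hε : IsEulerianSign ε) (Q : α → M) (x : α) :
    ∑ y ∈ Ici x, ε y • ∑ z ∈ Ici y, Q z = ε x • Q x :=
  calc
    ∑ y ∈ Ici x, ε y • ∑ z ∈ Ici y, Q z = ∑ z ∈ Ici x, ∑ y ∈ Icc x z, ε y • Q z := by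
      simp only [smul_sum]
      refine sum_comm' fun y z ↦ ?_
      simp only [mem_Ici, mem_Icc]
      exact ⟨fun ⟨hxy, hyz⟩ ↦ ⟨⟨hxy, hyz⟩, hxy.trans hyz⟩, And.left⟩
    _ = ∑ z ∈ Ici x, (∑ y ∈ Icc x z, (ε y : ℤ)) • Q z := by
      simp only [sum_smul, Units.smul_def]
    _ = (∑ y ∈ Icc x x, (ε y : ℤ)) • Q x := by
      refine sum_eq_single_of_mem x (mem_Ici.2 le_rfl) fun z hz hzx ↦ ?_
      rw [hε ((mem_Ici.1 hz).lt_of_ne' hzx), zero_smul]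
    _ = ε x • Q x := by rw [Icc_self, sum_singleton, Units.smul_def]

theorem IsEulerianSign.sum_Ici_smul_relationDefect (hε : IsEulerianSign ε) (Q : α → M) (x : α) :
    ∑ y ∈ Ici x, ε y • relationDefect ε Q y = relationDefect ε Q x := by
  simp only [relationDefect, smul_add, smul_smul, Int.units_mul_self, one_smul, sum_add_distrib,
    hε.sum_Ici_smul_sum_Ici]
  exact add_comm _ _

theorem odd_relations_from_even_relations_general (hε : IsEulerianSign ε)
    (h2 : IsSMulRegular M (2 : ℕ)) {Q : α → M}
    (h : ∀ x, ε x = 1 → 2 • Q x = -∑ y ∈ Ioi x, Q y) {x : α} (hx : ε x = -1) :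
    ∑ y ∈ Ioi x, Q y = 0 := by
  rw [← relationDefect_of_eq_neg_one Q hx]
  refine eq_zero_of_sum_Ici_smul_eq_self h2 (hε.sum_Ici_smul_relationDefect Q) (fun y hy ↦ ?_) x
  rw [relationDefect_of_eq_one Q hy, h y hy, neg_add_cancel]

end EulerianSign

section FinsetLattice

open Finset

variable {α M : Type*} [DecidableEq α]

theorem isEulerianSign_neg_one_pow_card :
    IsEulerianSign fun S : Finset α ↦ (-1 : ℤˣ) ^ #S := by
  intro S V hSV
  have hdisj : ∀ T ∈ (V \ S).powerset, Disjoint S T := fun T hT ↦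
    disjoint_sdiff.mono_right (mem_powerset.1 hT)
  have hinj : Set.InjOn (S ∪ ·) ((V \ S).powerset : Set (Finset α)) :=
    Set.LeftInvOn.injOn (f₁' := (· \ S)) fun T hT ↦ union_sdiff_cancel_left (hdisj T hT)
  have hterm : ∀ T ∈ (V \ S).powerset, (-1 : ℤ) ^ #(S ∪ T) = (-1) ^ #S * (-1) ^ #T := fun T hT ↦ by
    rw [card_union_of_disjoint (hdisj T hT), pow_add]
  simp only [Units.val_pow_eq_pow_val, Units.val_neg, Units.val_one]
  rw [Icc_eq_image_powerset hSV.subset, sum_image hinj, sum_congr rfl hterm, ← mul_sum,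
    sum_powerset_neg_one_pow_card_of_nonempty (sdiff_nonempty.2 hSV.not_subset), mul_zero]

theorem sum_powerset_compl_union_eq_sum_Ioi [Fintype α] [AddCommMonoid M] (Q : Finset α → M)
    (S : Finset α) :
    ∑ T ∈ Sᶜ.powerset.filter (· ≠ ∅), Q (S ∪ T) = ∑ U ∈ Ioi S, Q U := by
  have hmem : ∀ T ∈ Sᶜ.powerset.filter (· ≠ ∅), Disjoint S T ∧ T ≠ ∅ := by
    simp only [mem_filter, mem_powerset, subset_compl_iff_disjoint_left, imp_self, implies_true]
  refine sum_nbij' (S ∪ ·) (· \ S) (fun T hT ↦ ?_) (fun U hU ↦ ?_)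
    (fun T hT ↦ union_sdiff_cancel_left (hmem T hT).1)
    (fun U hU ↦ union_sdiff_of_subset (mem_Ioi.1 hU).le) fun _ _ ↦ rfl
  · obtain ⟨hdisj, hne⟩ := hmem T hT
    refine mem_Ioi.2 (left_lt_sup.2 fun hTS ↦ hne ?_)
    exact (disjoint_self_iff_empty T).1 (hdisj.mono_left hTS)
  · rw [mem_filter, mem_powerset, subset_compl_iff_disjoint_left, ← nonempty_iff_ne_empty]
    exact ⟨disjoint_sdiff, sdiff_nonempty.2 (mem_Ioi.1 hU).not_ge⟩

end FinsetLattice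

/-- (Theorem 1, antisymmetric relations.) If `Q` satisfies the even-`m` relations,
then it also satisfies the odd-`m` relations. -/
theorem odd_relations_from_even_relations (N : ℕ) (hN : 1 ≤ N)
    (Q : Finset (Fin N) → ℝ)
    (h : ∀ S : Finset (Fin N), Even S.card →
      Q S = -(1 / 2) * ∑ T ∈ Sᶜ.powerset.filter (· ≠ ∅), Q (S ∪ T)) :
    ∀ S : Finset (Fin N), Odd S.card →
      ∑ T ∈ Sᶜ.powerset.filter (· ≠ ∅), Q (S ∪ T) = 0 := by
  simp only [sum_powerset_compl_union_eq_sum_Ioi] at h ⊢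
  refine fun S hS ↦ odd_relations_from_even_relations_general isEulerianSign_neg_one_pow_card
    (IsSMulRegular.of_ne_zero two_ne_zero) (fun U hU ↦ ?_) hS.neg_one_pow
  rw [two_nsmul]
  linarith [h U ((neg_one_pow_eq_one_iff_even (by decide)).1 hU)]
end

section
/- (Corollary, independence of the even-m antisymmetric relations.) For every N ≥ 1 and every even M with 2 ≤ M ≤ N, there exist a function Q : Finset (Fin N) → ℝ and a subset S₀ ⊆ Fin N with |S₀| = M such that the even-m relation Q(S) = −(1/2) · Σ_{T ⊆ Sᶜ, T ≠ ∅} Q(S ∪ T) holds for every S ⊆ Fin N with |S| even and |S| > M, but fails at S₀, i.e. Q(S₀) ≠ −(1/2) · Σ_{T ⊆ S₀ᶜ, T ≠ ∅} Q(S₀ ∪ T). In other words, the relation at an even index M cannot be deduced from the relations at all even indices larger than M. -/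
/-!
The relation at `S` expresses `Q S` through the values of `Q` at the strict supersets of `S`, so
the relations form a unitriangular linear system: their defects `b S` can be prescribed
arbitrarily, by recursion from larger sets to smaller ones. A defect supported at `S₀` alone makes
the relation at `S₀` fail and all the others hold.
-/

open Finset

section Triangular

variable {P R E : Type*} [PartialOrder P] [LocallyFiniteOrderTop P] [WellFoundedGT P] [SMul R E]

theorem exists_forall_eq_smul_sum_Ioi_add [AddCommMonoid E] (c : R) (b : P → E) :
    ∃ Q : P → E, ∀ s, Q s = c • ∑ u ∈ Ioi s, Q u + b s := by
  let step (s : P) (Q : ∀ u, s < u → E) : E :=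
    c • ∑ u : Ioi s, Q u (mem_Ioi.1 u.2) + b s
  refine ⟨wellFounded_gt.fix step, fun s ↦ ?_⟩
  rw [WellFounded.fix_eq, ← sum_coe_sort (Ioi s)]

theorem exists_forall_eq_smul_sum_Ioi_iff_ne [AddCancelCommMonoid E] [Nontrivial E]
    (c : R) (s₀ : P) :
    ∃ Q : P → E, ∀ s, Q s = c • ∑ u ∈ Ioi s, Q u ↔ s ≠ s₀ := by
  classical
  obtain ⟨a, ha⟩ := exists_ne (0 : E)
  obtain ⟨Q, hQ⟩ := exists_forall_eq_smul_sum_Ioi_add c (Pi.single s₀ a)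
  refine ⟨Q, fun s ↦ ?_⟩
  calc
    Q s = c • ∑ u ∈ Ioi s, Q u ↔ (Pi.single s₀ a : P → E) s = 0 := by rw [hQ s, add_eq_left]
    _ ↔ s ≠ s₀ := by simp [Pi.single_apply, ha]

end Triangular

section StrictSupersets

variable {α : Type*} [Fintype α] [DecidableEq α]

theorem sum_union_nonempty_subset_compl_eq_sum_Ioi {E : Type*} [AddCommMonoid E]
    (Q : Finset α → E) (S : Finset α) :
    ∑ T ∈ Sᶜ.powerset.filter (· ≠ ∅), Q (S ∪ T) = ∑ U ∈ Ioi S, Q U := by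
  refine sum_nbij' (S ∪ ·) (· \ S) (fun T hT ↦ ?_) (fun U hU ↦ ?_) (fun T hT ↦ ?_)
    (fun U hU ↦ union_sdiff_of_subset (mem_Ioi.1 hU).subset) (fun _ _ ↦ rfl)
  · obtain ⟨hTS, hT₀⟩ : Disjoint T S ∧ T ≠ ∅ := by
      simpa [subset_compl_iff_disjoint_right] using hT
    have hT_not_subset : ¬T ⊆ S := fun h ↦ hT₀ (hTS.eq_bot_of_le h)
    exact mem_Ioi.2 (left_lt_sup.2 hT_not_subset)
  · have hU_not_subset : ¬U ⊆ S := (mem_Ioi.1 hU).not_subset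
    simpa [subset_compl_iff_disjoint_right, sdiff_disjoint] using hU_not_subset
  · have hTS : Disjoint S T := by
      simpa [subset_compl_iff_disjoint_left] using (mem_filter.1 hT).1
    exact union_sdiff_cancel_left hTS

theorem even_relations_independent_general {R E : Type*} [AddCancelCommMonoid E] [Nontrivial E]
    [SMul R E] (c : R) (S₀ : Finset α) :
    ∃ Q : Finset α → E, ∀ S,
      Q S = c • ∑ T ∈ Sᶜ.powerset.filter (· ≠ ∅), Q (S ∪ T) ↔ S ≠ S₀ := by
  simpa only [sum_union_nonempty_subset_compl_eq_sum_Ioi] using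
    exists_forall_eq_smul_sum_Ioi_iff_ne c S₀

end StrictSupersets

/-- (Corollary, independence of the even-`m` antisymmetric relations.) The even-`m`
relation at an even index `M` cannot be deduced from the relations at all even
indices larger than `M`. -/
theorem even_relations_independent (N M : ℕ) (hN : 1 ≤ N)
    (hM : Even M) (hM2 : 2 ≤ M) (hMN : M ≤ N) :
    ∃ (Q : Finset (Fin N) → ℝ) (S₀ : Finset (Fin N)),
      S₀.card = M ∧
      (∀ S : Finset (Fin N), Even S.card → M < S.card →
        Q S = -(1 / 2) * ∑ T ∈ Sᶜ.powerset.filter (· ≠ ∅), Q (S ∪ T)) ∧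
      Q S₀ ≠ -(1 / 2) * ∑ T ∈ S₀ᶜ.powerset.filter (· ≠ ∅), Q (S₀ ∪ T) := by
  obtain ⟨S₀, -, hS₀⟩ : ∃ S₀ ⊆ (univ : Finset (Fin N)), S₀.card = M :=
    exists_subset_card_eq (by simpa using hMN)
  obtain ⟨Q, hQ⟩ := even_relations_independent_general (E := ℝ) (-(1 / 2) : ℝ) S₀
  refine ⟨Q, S₀, hS₀, fun S _ hS ↦ (hQ S).2 ?_, fun h ↦ (hQ S₀).1 h rfl⟩
  rintro rfl
  exact hS.ne' hS₀
end

section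
/- (Theorem 2, antisymmetric Euler-coefficient formula.) If Q satisfies the even-m relations, i.e. for every S ⊆ Fin N with |S| even one has Q(S) = −(1/2) · Σ_{T ⊆ Sᶜ, T ≠ ∅} Q(S ∪ T), then for every S ⊆ Fin N with |S| even and Sᶜ ≠ ∅ one has the linear combination Q(S) = Σ_{T ⊆ Sᶜ, |T| odd} e₀(|T|) · Q(S ∪ T), where the sum runs over all nonempty subsets T of Sᶜ of odd cardinality. -/
/-- The constant term `E_k(0)` of the `k`-th Euler polynomial, for odd `k`,
expressed via Bernoulli numbers: `e₀(k) = 2 (1 − 2^(k+1)) B_{k+1} / (k+1)`. -/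
noncomputable def eulerConst (k : ℕ) : ℚ :=
  2 * (1 - 2 ^ (k + 1)) * bernoulli (k + 1) / (k + 1)

/-!
The numbers `e_k = E_k(0)` have exponential generating function `E = 2 / (exp + 1)`, so
`E' * (exp + 1) = E - 2`, which reads `∑ k ≤ n, n.choose k * e_{k+1} + e_{n+1} = e_n - 2 * [n = 0]`.

For even `#U` the relation at `U` says that `R U = f U + ∑ T ⊇ U, f T` vanishes, while
`e_{#U + 1} = 0` for odd `#U`. Hence `∑ U, e_{#U + 1} * R U = 0`. Collecting the coefficient of each
`f T` turns this into `∑ T, e_{#T} * f T = 2 * f ∅`, in which only `∅` and the odd `T` contribute.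
-/

section EulerRecurrence

open PowerSeries Finset
open scoped Nat

/-- The exponential generating function `∑ a n / n! * X ^ n` of a sequence `a`, which turns
binomial recurrences into identities between power series. -/
noncomputable def egf {K : Type*} [Field K] (a : ℕ → K) : K⟦X⟧ :=
  .mk fun n => a n / n !

lemma egf_mul_exp {K : Type*} [Field K] [Algebra ℚ K] (a : ℕ → K) :
    egf a * exp K = egf fun n => ∑ k ∈ range (n + 1), n.choose k * a k := by
  have := algebraRat.charZero K
  ext n
  simp only [egf, coeff_mul, coeff_mk, coeff_exp, Nat.sum_antidiagonal_eq_sum_range_succ_mk,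
    sum_div]
  refine sum_congr rfl fun k hk => ?_
  have hkn : k ≤ n := Nat.lt_succ_iff.mp (mem_range.mp hk)
  rw [Nat.cast_choose K hkn]
  have hn : (n ! : K) ≠ 0 := mod_cast n.factorial_ne_zero
  simp only [map_div₀, map_one, map_natCast]
  field_simp

lemma derivative_egf {K : Type*} [Field K] [CharZero K] (a : ℕ → K) :
    d⁄dX K (egf a) = egf fun n => a (n + 1) := by
  ext n
  have hn : (n + 1 : K) ≠ 0 := mod_cast n.succ_ne_zero
  simp only [egf, coeff_derivative, coeff_mk, Nat.factorial_succ, Nat.cast_mul, Nat.cast_succ]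
  field_simp

lemma coeff_ofNat {R : Type*} [CommSemiring R] (n m : ℕ) [m.AtLeastTwo] :
    coeff n (ofNat(m) : R⟦X⟧) = if n = 0 then ofNat(m) else 0 := by
  rw [← map_ofNat (C (R := R)) m, coeff_C]

lemma X_mul_egf_eulerConst :
    X * egf eulerConst = 2 * (bernoulliPowerSeries ℚ - rescale 2 (bernoulliPowerSeries ℚ)) := by
  ext n
  rw [← map_ofNat C 2, coeff_C_mul, map_sub, coeff_rescale]
  cases n with
  | zero => simp
  | succ n =>
    simp only [coeff_succ_X_mul, egf, bernoulliPowerSeries, coeff_mk, eulerConst,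
      Nat.factorial_succ, Nat.cast_mul, Nat.cast_succ, Algebra.algebraMap_self, RingHom.id_apply]
    field_simp

lemma rescale_two_bernoulliPowerSeries_mul :
    rescale 2 (bernoulliPowerSeries ℚ) * (exp ℚ ^ 2 - 1) = 2 * X := by
  have h := congrArg (rescale (2 : ℚ)) (bernoulliPowerSeries_mul_exp_sub_one ℚ)
  rw [exp_pow_eq_rescale_exp]
  simpa only [map_mul, map_sub, map_one, rescale_X, map_ofNat, Nat.cast_ofNat] using h

lemma egf_eulerConst_mul_exp_add_one : egf eulerConst * (exp ℚ + 1) = 2 := by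
  have hB := bernoulliPowerSeries_mul_exp_sub_one ℚ
  have hexp : exp ℚ - 1 ≠ 0 := fun h => X_ne_zero (by rw [← hB, h, mul_zero])
  apply mul_left_cancel₀ (mul_ne_zero X_ne_zero hexp)
  linear_combination (exp ℚ ^ 2 - 1) * X_mul_egf_eulerConst + 2 * (exp ℚ + 1) * hB
    - 2 * rescale_two_bernoulliPowerSeries_mul

lemma derivative_egf_eulerConst_mul_exp_add_one :
    d⁄dX ℚ (egf eulerConst) * (exp ℚ + 1) = egf eulerConst - 2 := by
  have h := congrArg (d⁄dX ℚ) egf_eulerConst_mul_exp_add_one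
  rw [Derivation.leibniz, map_add, derivative_exp, Derivation.map_one_eq_zero, add_zero,
    smul_eq_mul, smul_eq_mul, ← map_ofNat (C (R := ℚ)) 2, derivative_C] at h
  linear_combination h - egf_eulerConst_mul_exp_add_one

lemma sum_choose_mul_eulerConst_succ (n : ℕ) :
    ∑ k ∈ range (n + 1), n.choose k * eulerConst (k + 1) + eulerConst (n + 1) =
      eulerConst n - if n = 0 then 2 else 0 := by
  have h := congrArg (coeff n) derivative_egf_eulerConst_mul_exp_add_one
  rw [derivative_egf, mul_add, mul_one, egf_mul_exp, map_add, map_sub, coeff_ofNat] at h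
  simp only [egf, coeff_mk] at h
  split_ifs at h ⊢ with hn
  · subst hn
    simpa using h
  · field_simp at h
    linarith

end EulerRecurrence

lemma eulerConst_zero : eulerConst 0 = 1 := by
  norm_num [eulerConst, bernoulli_one]

lemma eulerConst_eq_zero_of_even {n : ℕ} (hn : Even n) (h0 : n ≠ 0) : eulerConst n = 0 := by
  rw [eulerConst, bernoulli_eq_zero_of_odd hn.add_one (by lia), mul_zero, zero_div]

section SubsetSums

open Finset

lemma sum_powerset_eulerConst_card_smul {α M : Type*} [AddCommMonoid M] [Module ℚ M]
    (f : Finset α → M) (A : Finset α) :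
    ∑ T ∈ A.powerset, eulerConst #T • f T =
      f ∅ + ∑ T ∈ A.powerset with Odd #T, eulerConst #T • f T := by
  classical
  rw [← add_sum_erase _ _ (empty_mem_powerset A), card_empty, eulerConst_zero, one_smul]
  congr 1
  refine (sum_subset ?_ ?_).symm
  · intro T hT
    obtain ⟨hTA, hT_odd⟩ := mem_filter.mp hT
    exact mem_erase.mpr ⟨card_pos.mp hT_odd.pos |>.ne_empty, hTA⟩
  · intro T hT hT_not_odd
    obtain ⟨hT_ne, hTA⟩ := mem_erase.mp hT
    have hT_even : Even #T := by simpa [hTA] using hT_not_odd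
    rw [eulerConst_eq_zero_of_even hT_even (card_ne_zero.mpr (nonempty_iff_ne_empty.mpr hT_ne)),
      zero_smul]

variable {α M : Type*} [DecidableEq α]

lemma sum_Icc_eq_sum_powerset_sdiff [AddCommMonoid M] {S A : Finset α} (hSA : S ⊆ A)
    (f : Finset α → M) : ∑ T ∈ Icc S A, f T = ∑ T ∈ (A \ S).powerset, f (S ∪ T) := by
  rw [Icc_eq_image_powerset hSA, sum_image]
  intro T hT U hU hTU
  have disjoint_of_mem {V : Finset α} (hV : V ∈ (A \ S).powerset) : Disjoint S V :=
    disjoint_sdiff.mono_right (mem_powerset.mp hV)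
  simpa only [union_sdiff_cancel_left (disjoint_of_mem hT),
    union_sdiff_cancel_left (disjoint_of_mem hU)] using congrArg (· \ S) hTU

lemma sum_powerset_smul_sum_Icc {R : Type*} [Semiring R] [AddCommMonoid M] [Module R M]
    (c : Finset α → R) (f : Finset α → M) (A : Finset α) :
    ∑ U ∈ A.powerset, c U • ∑ T ∈ Icc U A, f T =
      ∑ T ∈ A.powerset, (∑ U ∈ T.powerset, c U) • f T := by
  simp only [smul_sum, sum_smul]
  refine sum_comm' fun U T => ?_
  simp only [mem_powerset, mem_Icc]
  exact ⟨fun ⟨_, hUT, hTA⟩ => ⟨hUT, hTA⟩, fun ⟨hUT, hTA⟩ => ⟨hUT.trans hTA, hUT, hTA⟩⟩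

variable [AddCommGroup M] [Module ℚ M]

lemma eq_neg_half_smul_sum_ne_iff {ι : Type*} [DecidableEq ι] {s : Finset ι} {a : ι} (ha : a ∈ s)
    (f : ι → M) :
    f a = -(1 / 2 : ℚ) • ∑ i ∈ s with i ≠ a, f i ↔ f a + ∑ i ∈ s, f i = 0 := by
  rw [filter_ne', ← add_sum_erase s f ha]
  constructor <;> intro h
  · linear_combination (norm := module) (2 : ℚ) • h
  · linear_combination (norm := module) (1 / 2 : ℚ) • h

lemma sum_powerset_eulerConst_card_succ (T : Finset α) :
    ∑ U ∈ T.powerset, eulerConst (#U + 1) + eulerConst (#T + 1) =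
      eulerConst #T - if T = ∅ then 2 else 0 := by
  rw [sum_powerset_apply_card fun k => eulerConst (k + 1)]
  simpa only [nsmul_eq_mul, card_eq_zero] using sum_choose_mul_eulerConst_succ #T

lemma apply_empty_eq_sum_odd_of_even_relations {f : Finset α → M} {A : Finset α}
    (h : ∀ U ⊆ A, Even #U → f U + ∑ T ∈ Icc U A, f T = 0) :
    f ∅ = ∑ T ∈ A.powerset with Odd #T, eulerConst #T • f T := by
  have weighted_relations : ∑ U ∈ A.powerset,
      eulerConst (#U + 1) • (f U + ∑ T ∈ Icc U A, f T) = 0 := by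
    refine sum_eq_zero fun U hU => ?_
    rcases Nat.even_or_odd #U with hU_even | hU_odd
    · rw [h U (mem_powerset.mp hU) hU_even, smul_zero]
    · rw [eulerConst_eq_zero_of_even hU_odd.add_one (Nat.succ_ne_zero _), zero_smul]
  have euler_sum : ∑ T ∈ A.powerset, eulerConst #T • f T - (2 : ℚ) • f ∅ = 0 := by
    rw [← weighted_relations]
    simp only [smul_add, sum_add_distrib, sum_powerset_smul_sum_Icc]
    simp only [← sum_add_distrib, ← add_smul, add_comm (eulerConst _),
      sum_powerset_eulerConst_card_succ, sub_smul, ite_smul, zero_smul, sum_sub_distrib,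
      sum_ite_eq', empty_mem_powerset, if_true]
  rw [sum_powerset_eulerConst_card_smul, two_smul, add_sub_add_left_eq_sub] at euler_sum
  exact (sub_eq_zero.mp euler_sum).symm

theorem even_from_odd_euler_coefficients_general (A : Finset α) (Q : Finset α → M)
    (h : ∀ S ⊆ A, Even #S →
      Q S = -(1 / 2 : ℚ) • ∑ T ∈ (A \ S).powerset with T ≠ ∅, Q (S ∪ T))
    {S : Finset α} (hSA : S ⊆ A) (hS : Even #S) :
    Q S = ∑ T ∈ (A \ S).powerset with Odd #T, eulerConst #T • Q (S ∪ T) := by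
  rw [← apply_empty_eq_sum_odd_of_even_relations (f := fun T => Q (S ∪ T)), union_empty]
  intro U hU hU_even
  obtain ⟨hUA, hUS⟩ := subset_sdiff.mp hU
  have hSU_even : Even #(S ∪ U) := by
    rw [card_union_of_disjoint hUS.symm]
    exact hS.add hU_even
  have relation := (eq_neg_half_smul_sum_ne_iff (empty_mem_powerset (A \ (S ∪ U)))
    fun T => Q (S ∪ U ∪ T)).mp (by simpa using h (S ∪ U) (union_subset hSA hUA) hSU_even)
  simpa only [sum_Icc_eq_sum_powerset_sdiff hU, sdiff_sdiff_left, ← union_assoc, union_empty,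
    sup_eq_union] using relation

end SubsetSums

/-- (Theorem 2, antisymmetric Euler-coefficient formula.) If `Q` satisfies the
even-`m` relations, then every even-`|S|` quantity is the linear combination of
the odd ones with Euler-polynomial constant terms as coefficients. -/
theorem even_from_odd_euler_coefficients (N : ℕ) (hN : 1 ≤ N)
    (Q : Finset (Fin N) → ℝ)
    (h : ∀ S : Finset (Fin N), Even S.card →
      Q S = -(1 / 2) * ∑ T ∈ Sᶜ.powerset.filter (· ≠ ∅), Q (S ∪ T)) :
    ∀ S : Finset (Fin N), Even S.card → Sᶜ ≠ ∅ →
      Q S = ∑ T ∈ Sᶜ.powerset.filter (fun T => Odd T.card),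
        (eulerConst T.card : ℝ) * Q (S ∪ T) := by
  intro S hS _
  simpa [Rat.smul_def, Finset.compl_eq_univ_sdiff] using
    even_from_odd_euler_coefficients_general Finset.univ Q
      (by simpa [Rat.smul_def, Finset.compl_eq_univ_sdiff] using h) S.subset_univ hS
end

section
/- (Proposition, expression of the even partial sums.) Suppose Q satisfies the even-m relations, i.e. for every S ⊆ Fin N with |S| even one has Q(S) = −(1/2) · Σ_{T ⊆ Sᶜ, T ≠ ∅} Q(S ∪ T). Define rational coefficients γ_j^{(2l)} by γ_j^{(0)} := 0 for all j and the recurrence γ_j^{(2l)} := −(1/2)·(γ_{2l−1}^{(2l−2)} + 1)·C(j, 2l−1) + γ_j^{(2l−2)}, where C(j, q) is the binomial coefficient. Then for every S ⊆ Fin N with |S| odd, say |S| = 2K+1, and every integer l with 1 ≤ l ≤ ⌊(N−1)/2⌋ − K, the partial sum S_{2l} := Σ_{j=1}^{2l} Q⁽ʲ⁾(S) satisfies S_{2l} = Σ_{j=2l+1}^{N−|S|} γ_j^{(2l)} · Q⁽ʲ⁾(S). -/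
/-- The coefficients `γ_j^{(2l)}`: `gam l j = γ_j^{(2l)}`, defined by
`γ_j^{(0)} = 0` and the recurrence
`γ_j^{(2l)} = −(1/2)(γ_{2l−1}^{(2l−2)} + 1) C(j, 2l−1) + γ_j^{(2l−2)}`. -/
def gam : ℕ → ℕ → ℚ
  | 0, _ => 0
  | l + 1, j => -(1 / 2) * (gam l (2 * l + 1) + 1) * (j.choose (2 * l + 1) : ℚ) + gam l j

/-!
Write `q j = Q⁽ʲ⁾(S)`. Summing the even relation over the supersets of `S` with `j` more elements,
`j` odd, and counting the pairs of nested supersets gives `q j = -(1/2) ∑_{i > j} C(i, j) q i`.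
Substituting this for `j = 2l + 1` in `S_{2l} + q (2l + 1)` pushes the sum to higher levels, with
coefficients obeying exactly the recurrence of `γ`. The remaining term `q (2l + 2)` then cancels
provided that `γ_{2l+2}^{(2l+2)} = -1`.

For this identity, let `d i / i!` be the coefficients of the odd series
`c = -tanh (x / 2) = (1 - eˣ) / (1 + eˣ)`. The odd coefficients of `c (1 + eˣ) = 1 - eˣ` show that
`γ_j^{(2l)} = ∑_{i < 2l} d i C(j, i)`, and the even ones then evaluate the diagonal to `-1`.
-/

section NegTanhHalf

open PowerSeries Finset

theorem factorial_mul_coeff_mul_exp {A : Type*} [CommRing A] [Algebra ℚ A] (f : A⟦X⟧) (n : ℕ) :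
    (n.factorial : A) * coeff n (f * exp A) =
      ∑ i ∈ range (n + 1), (n.choose i : A) * (i.factorial * coeff i f) := by
  rw [coeff_mul, Finset.Nat.sum_antidiagonal_eq_sum_range_succ_mk, mul_sum]
  refine sum_congr rfl fun i hi => ?_
  have hin : i ≤ n := mem_range_succ_iff.mp hi
  have hfact : ((n - i).factorial : A) * coeff (n - i) (exp A) = 1 := by
    rw [coeff_exp, ← map_natCast (algebraMap ℚ A), ← map_mul,
      mul_one_div_cancel (Nat.cast_ne_zero.mpr (Nat.factorial_ne_zero _)), map_one]
  rw [← Nat.choose_mul_factorial_mul_factorial hin]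
  push_cast
  linear_combination (n.choose i * i.factorial * coeff i f : A) * hfact

/-- The formal power series `-tanh (x / 2) = (1 - eˣ) / (1 + eˣ)`, the exponential generating
function of the coefficients through which `gam` is expressed in the binomial basis. -/
noncomputable def negTanhHalf : ℚ⟦X⟧ := (1 - exp ℚ) * (1 + exp ℚ)⁻¹

theorem negTanhHalf_mul_one_add_exp : negTanhHalf * (1 + exp ℚ) = 1 - exp ℚ := by
  rw [negTanhHalf, mul_assoc, PowerSeries.inv_mul_cancel _ (by simp), mul_one]

theorem evalNegHom_negTanhHalf : evalNegHom negTanhHalf = -negTanhHalf := by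
  have hneg : evalNegHom negTanhHalf * (1 + evalNegHom (exp ℚ)) = 1 - evalNegHom (exp ℚ) := by
    simpa only [map_mul, map_add, map_sub, map_one] using
      congrArg evalNegHom negTanhHalf_mul_one_add_exp
  have hexp : exp ℚ * evalNegHom (exp ℚ) = 1 := exp_mul_exp_neg_eq_one
  have hne : (1 + exp ℚ : ℚ⟦X⟧) ≠ 0 := fun h => by simpa using congrArg constantCoeff h
  refine mul_right_cancel₀ hne ?_
  linear_combination exp ℚ * hneg + negTanhHalf_mul_one_add_exp -
    (evalNegHom negTanhHalf + 1) * hexp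

/-- The `n`-th derivative of `-tanh (x / 2)` at `0`. -/
noncomputable def negTanhHalfCoeff (n : ℕ) : ℚ := n.factorial * coeff n negTanhHalf

theorem negTanhHalfCoeff_two_mul (k : ℕ) : negTanhHalfCoeff (2 * k) = 0 := by
  have h := congrArg (coeff (2 * k)) evalNegHom_negTanhHalf
  rw [evalNegHom, coeff_rescale, map_neg, pow_mul, neg_one_sq, one_pow, one_mul,
    self_eq_neg] at h
  rw [negTanhHalfCoeff, h, mul_zero]

theorem sum_choose_mul_negTanhHalfCoeff {n : ℕ} (hn : n ≠ 0) :
    ∑ i ∈ range n, (n.choose i : ℚ) * negTanhHalfCoeff i = -1 - 2 * negTanhHalfCoeff n := by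
  have hcoeff : coeff n negTanhHalf + coeff n (negTanhHalf * exp ℚ) = -(1 / n.factorial) := by
    simpa [mul_add, coeff_one, hn, coeff_exp] using
      congrArg (coeff n) negTanhHalf_mul_one_add_exp
  have hsum := factorial_mul_coeff_mul_exp negTanhHalf n
  rw [sum_range_succ, Nat.choose_self] at hsum
  have hfact : (n.factorial : ℚ) * (1 / n.factorial) = 1 :=
    mul_one_div_cancel (Nat.cast_ne_zero.mpr n.factorial_ne_zero)
  simp only [negTanhHalfCoeff]
  push_cast at hsum
  linear_combination n.factorial * hcoeff - hsum - hfact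

theorem gam_eq_sum_choose_mul_negTanhHalfCoeff (l j : ℕ) :
    gam l j = ∑ i ∈ range (2 * l), (j.choose i : ℚ) * negTanhHalfCoeff i := by
  induction l generalizing j with
  | zero => simp [gam]
  | succ l ih =>
    have hodd : negTanhHalfCoeff (2 * l + 1) = -(1 / 2) * (gam l (2 * l + 1) + 1) := by
      have h := sum_choose_mul_negTanhHalfCoeff (n := 2 * l + 1) (by omega)
      rw [sum_range_succ, negTanhHalfCoeff_two_mul, ← ih] at h
      linear_combination (1 / 2) * h
    rw [gam, mul_add_one 2 l, sum_range_succ, sum_range_succ, ← ih, negTanhHalfCoeff_two_mul, hodd]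
    ring

theorem gam_two_mul_eq_neg_one (l : ℕ) (hl : l ≠ 0) : gam l (2 * l) = -1 := by
  rw [gam_eq_sum_choose_mul_negTanhHalfCoeff,
    sum_choose_mul_negTanhHalfCoeff (mul_ne_zero two_ne_zero hl), negTanhHalfCoeff_two_mul]
  ring

end NegTanhHalf

section LevelSum

open Finset

variable {α M : Type*} [DecidableEq α] [AddCommMonoid M]

theorem sum_powersetCard_sum_powersetCard_sdiff (A : Finset α) (i j : ℕ) (f : Finset α → M) :
    ∑ T ∈ A.powersetCard j, ∑ U ∈ (A \ T).powersetCard i, f (T ∪ U) =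
      (i + j).choose j • ∑ V ∈ A.powersetCard (i + j), f V := by
  calc ∑ T ∈ A.powersetCard j, ∑ U ∈ (A \ T).powersetCard i, f (T ∪ U)
      = ∑ V ∈ A.powersetCard (i + j), ∑ _T ∈ V.powersetCard j, f V := by
        simp only [sum_sigma']
        refine sum_nbij' (fun p => ⟨p.1 ∪ p.2, p.1⟩) (fun p => ⟨p.2, p.1 \ p.2⟩) ?_ ?_ ?_ ?_ ?_
        all_goals simp only [Sigma.forall, mem_sigma, mem_powersetCard, subset_sdiff]
        · rintro T U ⟨⟨hTA, hT⟩, ⟨hUA, hUT⟩, hU⟩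
          exact ⟨⟨union_subset hTA hUA, by rw [card_union_of_disjoint hUT.symm]; omega⟩,
            subset_union_left, hT⟩
        · rintro V T ⟨⟨hVA, hV⟩, hTV, hT⟩
          exact ⟨⟨hTV.trans hVA, hT⟩, ⟨sdiff_subset.trans hVA, sdiff_disjoint⟩,
            by rw [card_sdiff_of_subset hTV]; omega⟩
        · rintro T U ⟨-, ⟨-, hUT⟩, -⟩
          rw [union_sdiff_cancel_left hUT.symm]
        · rintro V T ⟨-, hTV, -⟩
          rw [union_sdiff_of_subset hTV]
        · simp only [implies_true]
    _ = (i + j).choose j • ∑ V ∈ A.powersetCard (i + j), f V := by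
        rw [smul_sum]
        refine sum_congr rfl fun V hV => ?_
        rw [sum_const, card_powersetCard, (mem_powersetCard.mp hV).2]

variable [Fintype α]

/-- The level sum `Q⁽ʲ⁾(S)` of a set function `Q`: its sum over the supersets of `S` with exactly
`j` more elements, encoded as the unions of `S` with the `j`-element subsets of its complement. -/
def levelSum (Q : Finset α → M) (S : Finset α) (j : ℕ) : M :=
  ∑ T ∈ Sᶜ.powersetCard j, Q (S ∪ T)

theorem levelSum_levelSum (Q : Finset α → M) (S : Finset α) (i j : ℕ) :
    levelSum (fun T => levelSum Q T i) S j = (i + j).choose j • levelSum Q S (i + j) := by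
  simpa only [levelSum, compl_union, sdiff_eq_inter_compl, union_assoc] using
    sum_powersetCard_sum_powersetCard_sdiff Sᶜ i j fun V => Q (S ∪ V)

theorem sum_nonempty_eq_sum_levelSum (Q : Finset α → M) (S : Finset α) :
    ∑ T ∈ Sᶜ.powerset with T ≠ ∅, Q (S ∪ T) = ∑ i ∈ Ioc 0 #Sᶜ, levelSum Q S i := by
  have hsize : ∀ T ∈ Sᶜ.powerset.filter (· ≠ ∅), #T ∈ Ioc 0 #Sᶜ := by
    intro T hT
    rw [mem_filter, mem_powerset] at hT
    exact mem_Ioc.mpr ⟨card_pos.mpr (nonempty_iff_ne_empty.mpr hT.2), card_le_card hT.1⟩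
  rw [← sum_fiberwise_of_maps_to hsize]
  refine sum_congr rfl fun i hi => sum_congr ?_ fun _ _ => rfl
  grind

theorem levelSum_sum_nonempty (Q : Finset α → M) (S : Finset α) (j : ℕ) :
    levelSum (fun T => ∑ U ∈ Tᶜ.powerset with U ≠ ∅, Q (T ∪ U)) S j =
      ∑ i ∈ Ioc j #Sᶜ, i.choose j • levelSum Q S i := by
  have hcard {T : Finset α} (hT : T ∈ Sᶜ.powersetCard j) : #(S ∪ T)ᶜ = #Sᶜ - j := by
    rw [mem_powersetCard] at hT
    rw [compl_union, ← sdiff_eq_inter_compl, card_sdiff_of_subset hT.1, hT.2]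
  calc levelSum (fun T => ∑ U ∈ Tᶜ.powerset with U ≠ ∅, Q (T ∪ U)) S j
      = ∑ T ∈ Sᶜ.powersetCard j, ∑ i ∈ Ioc 0 (#Sᶜ - j), levelSum Q (S ∪ T) i :=
        sum_congr rfl fun T hT => by rw [← hcard hT, ← sum_nonempty_eq_sum_levelSum]
    _ = ∑ i ∈ Ioc 0 (#Sᶜ - j), (i + j).choose j • levelSum Q S (i + j) := by
        rw [sum_comm]
        exact sum_congr rfl fun i _ => levelSum_levelSum Q S i j
    _ = ∑ i ∈ Ioc j #Sᶜ, i.choose j • levelSum Q S i :=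
        sum_nbij' (· + j) (· - j) (by grind) (by grind) (by grind) (by grind) (by grind)

end LevelSum

section PartialSums

open Finset

variable {M : Type*} [AddCommGroup M] [Module ℚ M]

theorem sum_Icc_one_two_mul_eq_sum_gam_smul {q : ℕ → M} {n l : ℕ}
    (hl : 2 * l ≤ n)
    (hq : ∀ k < l, q (2 * k + 1) =
      -(1 / 2 : ℚ) • ∑ i ∈ Ioc (2 * k + 1) n, i.choose (2 * k + 1) • q i) :
    ∑ j ∈ Icc 1 (2 * l), q j = ∑ j ∈ Ioc (2 * l) n, gam l j • q j := by
  induction l with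
  | zero => simp [gam]
  | succ l ih =>
    have hgam : ∑ j ∈ Ioc (2 * l + 1) n, gam (l + 1) j • q j =
        (gam l (2 * l + 1) + 1) • q (2 * l + 1) + ∑ j ∈ Ioc (2 * l + 1) n, gam l j • q j := by
      rw [hq l l.lt_succ_self, smul_sum, smul_sum, ← sum_add_distrib]
      refine sum_congr rfl fun j _ => ?_
      rw [gam]
      module
    have hpeel (f : ℕ → M) {a : ℕ} (ha : a < n) :
        ∑ j ∈ Ioc a n, f j = f (a + 1) + ∑ j ∈ Ioc (a + 1) n, f j := by
      rw [add_sum_Ioc_eq_sum_Icc ha, Icc_add_one_left_eq_Ioc]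
    calc ∑ j ∈ Icc 1 (2 * (l + 1)), q j
        = ∑ j ∈ Icc 1 (2 * l), q j + q (2 * l + 1) + q (2 * l + 2) := by
          rw [mul_add_one, sum_Icc_succ_top (by omega), sum_Icc_succ_top (by omega)]
      _ = ∑ j ∈ Ioc (2 * l) n, gam l j • q j + q (2 * l + 1) + q (2 * l + 2) := by
          rw [ih (by omega) fun k hk => hq k (hk.trans l.lt_succ_self)]
      _ = ∑ j ∈ Ioc (2 * l + 1) n, gam (l + 1) j • q j + q (2 * l + 2) := by
          rw [hpeel _ (by omega : 2 * l < n), hgam]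
          module
      _ = ∑ j ∈ Ioc (2 * (l + 1)) n, gam (l + 1) j • q j := by
          rw [hpeel _ (by omega : 2 * l + 1 < n), ← mul_add_one 2 l,
            gam_two_mul_eq_neg_one (l + 1) (by omega)]
          module

theorem partial_sums_even_index_general {α : Type*} [Fintype α] [DecidableEq α]
    {Q : Finset α → M}
    (h : ∀ S : Finset α, Even #S →
      Q S = -(1 / 2 : ℚ) • ∑ T ∈ Sᶜ.powerset with T ≠ ∅, Q (S ∪ T))
    {S : Finset α} (hS : Odd #S) {l : ℕ} (hl : 2 * l ≤ #Sᶜ) :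
    ∑ j ∈ Icc 1 (2 * l), levelSum Q S j = ∑ j ∈ Ioc (2 * l) #Sᶜ, gam l j • levelSum Q S j := by
  refine sum_Icc_one_two_mul_eq_sum_gam_smul hl fun k _ => ?_
  rw [← levelSum_sum_nonempty, levelSum, levelSum, smul_sum]
  refine sum_congr rfl fun T hT => h (S ∪ T) ?_
  obtain ⟨hTS, hTcard⟩ := mem_powersetCard.mp hT
  rw [card_union_of_disjoint (disjoint_compl_right.mono_right hTS), hTcard]
  exact hS.add_odd (odd_two_mul_add_one k)

end PartialSums

/-- (Proposition, expression of the even partial sums.) For `|S| = 2K+1` odd and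
`1 ≤ l ≤ ⌊(N−1)/2⌋ − K`, the partial sum `S_{2l} = Σ_{j=1}^{2l} Q⁽ʲ⁾(S)` equals
`Σ_{j=2l+1}^{N−|S|} γ_j^{(2l)} Q⁽ʲ⁾(S)`. -/
theorem partial_sums_even_index (N : ℕ) (hN : 1 ≤ N)
    (Q : Finset (Fin N) → ℝ)
    (h : ∀ S : Finset (Fin N), Even S.card →
      Q S = -(1 / 2) * ∑ T ∈ Sᶜ.powerset.filter (· ≠ ∅), Q (S ∪ T)) :
    ∀ (S : Finset (Fin N)) (K l : ℕ), S.card = 2 * K + 1 →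
      1 ≤ l → K + l ≤ (N - 1) / 2 →
      ∑ j ∈ Finset.Icc 1 (2 * l), (∑ T ∈ Sᶜ.powersetCard j, Q (S ∪ T)) =
        ∑ j ∈ Finset.Icc (2 * l + 1) (N - S.card),
          (gam l j : ℝ) * ∑ T ∈ Sᶜ.powersetCard j, Q (S ∪ T) := by
  intro S K l hS _ hKl
  simpa only [levelSum, Finset.card_compl, Fintype.card_fin, Finset.Icc_add_one_left_eq_Ioc,
    Rat.smul_def] using partial_sums_even_index_general (Q := Q) (S := S) (l := l)
    (by simpa [Rat.smul_def] using h) ⟨K, hS⟩ (by rw [Finset.card_compl, Fintype.card_fin]; omega)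
end

section
/- (Theorem 3, symmetric relations.) If Q satisfies the odd-m relations, i.e. for every S ⊆ Fin N with |S| odd one has Q(S) = −(1/2) · Σ_{T ⊆ Sᶜ, T ≠ ∅} Q(S ∪ T), then Q also satisfies the even-m relations: for every S ⊆ Fin N with |S| even, Σ_{T ⊆ Sᶜ, T ≠ ∅} Q(S ∪ T) = 0. -/
/-!
Let `A` be the operator `(A Q) S = (-1)^|S| ∑_{V ⊇ S} Q V`. The relation at an odd `S`, and likewise
the relation at an even `S`, says exactly that `(A Q) S = Q S`. Möbius inversion on the Boolean
lattice is the identity `A² = 1`, so `F = A Q - Q` satisfies `A F = -F`. If `F` vanishes at all odd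
sets, then it vanishes everywhere: if it vanishes strictly above an even set `S`, then
`(A F) S = F S`, and hence `2 F S = 0`.
-/

open Finset

section BooleanLattice

variable {α M : Type*} [DecidableEq α]

theorem sum_powerset_sdiff_union [AddCommMonoid M] {S V : Finset α} (hSV : S ⊆ V)
    (f : Finset α → M) : ∑ T ∈ (V \ S).powerset, f (S ∪ T) = ∑ U ∈ Icc S V, f U := by
  have union_injOn : Set.InjOn (S ∪ ·) ((V \ S).powerset : Set (Finset α)) := by
    intro T hT T' hT' hTT'
    have disjoint_of_mem {R : Finset α} (hR : R ∈ (V \ S).powerset) : Disjoint S R :=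
      disjoint_sdiff.mono_right (mem_powerset.mp hR)
    rw [← union_sdiff_cancel_left (disjoint_of_mem hT),
      ← union_sdiff_cancel_left (disjoint_of_mem hT')]
    exact congrArg (· \ S) hTT'
  rw [Icc_eq_image_powerset hSV, sum_image union_injOn]

theorem sum_Icc_neg_one_pow_card (S V : Finset α) :
    ∑ U ∈ Icc S V, (-1 : ℤ) ^ #U = if S = V then (-1) ^ #S else 0 := by
  by_cases hSV : S ⊆ V
  · have card_union {T : Finset α} (hT : T ∈ (V \ S).powerset) : #(S ∪ T) = #S + #T :=
      card_union_of_disjoint (disjoint_sdiff.mono_right (mem_powerset.mp hT))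
    have sdiff_eq_empty : V \ S = ∅ ↔ S = V :=
      sdiff_eq_empty_iff_subset.trans ⟨hSV.antisymm, fun h => h.ge⟩
    calc ∑ U ∈ Icc S V, (-1 : ℤ) ^ #U
        = ∑ T ∈ (V \ S).powerset, (-1 : ℤ) ^ #(S ∪ T) := (sum_powerset_sdiff_union hSV _).symm
      _ = (-1) ^ #S * ∑ T ∈ (V \ S).powerset, (-1 : ℤ) ^ #T := by
          rw [mul_sum]
          exact sum_congr rfl fun T hT => by rw [card_union hT, pow_add]
      _ = if S = V then (-1) ^ #S else 0 := by
          simp only [sum_powerset_neg_one_pow_card, sdiff_eq_empty, mul_ite, mul_one, mul_zero]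
  · rw [Icc_eq_empty hSV, sum_empty, if_neg fun h => hSV h.le]

variable [Fintype α]

theorem add_sum_nonempty_union [AddCommMonoid M] (Q : Finset α → M) (S : Finset α) :
    Q S + ∑ T ∈ Sᶜ.powerset.filter (· ≠ ∅), Q (S ∪ T) = ∑ V ∈ Ici S, Q V := by
  calc Q S + ∑ T ∈ Sᶜ.powerset.filter (· ≠ ∅), Q (S ∪ T)
      = ∑ T ∈ Sᶜ.powerset, Q (S ∪ T) := by
        rw [filter_ne', ← add_sum_erase _ _ (empty_mem_powerset Sᶜ), union_empty]
    _ = ∑ V ∈ Ici S, Q V := sum_powerset_sdiff_union (subset_univ S) Q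

end BooleanLattice

section SignedUpperSum

variable {α M : Type*} [Fintype α] [DecidableEq α] [AddCommGroup M]

/-- The signed upper-sum operator `Q ↦ (S ↦ (-1)^|S| ∑_{V ⊇ S} Q V)` on functions on the Boolean
lattice, whose fixed points are the functions satisfying both the odd and the even relations. It is
bundled as an additive map; the sign acts through the `ℤ`-module structure of `M`. -/
def signedUpperSum : (Finset α → M) →+ (Finset α → M) where
  toFun Q S := (-1 : ℤ) ^ #S • ∑ V ∈ Ici S, Q V
  map_zero' := by
    ext S
    simp only [Pi.zero_apply, sum_const_zero, smul_zero]
  map_add' P Q := by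
    ext S
    simp only [Pi.add_apply, sum_add_distrib, smul_add]

theorem signedUpperSum_apply (Q : Finset α → M) (S : Finset α) :
    signedUpperSum Q S = (-1 : ℤ) ^ #S • ∑ V ∈ Ici S, Q V :=
  rfl

theorem signedUpperSum_apply_of_even (Q : Finset α → M) {S : Finset α} (hS : Even #S) :
    signedUpperSum Q S = ∑ V ∈ Ici S, Q V := by
  rw [signedUpperSum_apply, hS.neg_one_pow, one_smul]

theorem signedUpperSum_apply_of_odd (Q : Finset α → M) {S : Finset α} (hS : Odd #S) :
    signedUpperSum Q S = -∑ V ∈ Ici S, Q V := by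
  rw [signedUpperSum_apply, hS.neg_one_pow, neg_one_smul]

theorem signedUpperSum_involutive :
    Function.Involutive (signedUpperSum : (Finset α → M) → Finset α → M) := by
  intro Q
  ext S
  have sum_signedUpperSum : ∑ U ∈ Ici S, signedUpperSum Q U = (-1 : ℤ) ^ #S • Q S :=
    calc ∑ U ∈ Ici S, signedUpperSum Q U
        = ∑ U ∈ Ici S, ∑ V ∈ Ici U, (-1 : ℤ) ^ #U • Q V := by
          simp only [signedUpperSum_apply, smul_sum]
      _ = ∑ V ∈ Ici S, ∑ U ∈ Icc S V, (-1 : ℤ) ^ #U • Q V := by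
          refine sum_comm' fun U V => ?_
          simp only [mem_Ici, mem_Icc]
          exact ⟨fun ⟨hSU, hUV⟩ => ⟨⟨hSU, hUV⟩, hSU.trans hUV⟩, And.left⟩
      _ = (-1 : ℤ) ^ #S • Q S := by
          simp only [← sum_smul, sum_Icc_neg_one_pow_card, ite_smul, zero_smul, sum_ite_eq,
            mem_Ici, le_refl, if_true]
  rw [signedUpperSum_apply, sum_signedUpperSum, smul_smul, ← mul_pow, neg_one_mul, neg_neg,
    one_pow, one_smul]

variable [IsAddTorsionFree M]

theorem eq_zero_of_signedUpperSum_eq_neg {F : Finset α → M} (hF : signedUpperSum F = -F)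
    (hodd : ∀ S, Odd #S → F S = 0) : F = 0 := by
  ext S
  induction S using WellFoundedGT.induction with
  | ind S ih =>
    rcases (#S).even_or_odd with hS | hS
    · have sum_Ioi : ∑ V ∈ Ioi S, F V = 0 := sum_eq_zero fun V hV => ih V (mem_Ioi.mp hV)
      have eq_neg : F S = -F S :=
        calc F S = ∑ V ∈ Ici S, F V := by rw [← add_sum_Ioi_eq_sum_Ici, sum_Ioi, add_zero]
          _ = signedUpperSum F S := (signedUpperSum_apply_of_even F hS).symm
          _ = -F S := congrFun hF S
      exact self_eq_neg.mp eq_neg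
    · exact hodd S hS

theorem signedUpperSum_eq_self_of_odd {Q : Finset α → M}
    (hodd : ∀ S, Odd #S → signedUpperSum Q S = Q S) : signedUpperSum Q = Q := by
  have map_defect : signedUpperSum (signedUpperSum Q - Q) = -(signedUpperSum Q - Q) := by
    rw [map_sub, signedUpperSum_involutive Q, neg_sub]
  exact sub_eq_zero.mp <|
    eq_zero_of_signedUpperSum_eq_neg map_defect fun S hS => sub_eq_zero.mpr (hodd S hS)

theorem even_relations_from_odd_relations_general (Q : Finset α → M)
    (h : ∀ S : Finset α, Odd #S →
      2 • Q S + ∑ T ∈ Sᶜ.powerset.filter (· ≠ ∅), Q (S ∪ T) = 0) :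
    ∀ S : Finset α, Even #S → ∑ T ∈ Sᶜ.powerset.filter (· ≠ ∅), Q (S ∪ T) = 0 := by
  have fixed : signedUpperSum Q = Q := signedUpperSum_eq_self_of_odd fun S hS => by
    rw [signedUpperSum_apply_of_odd Q hS, neg_eq_iff_add_eq_zero, ← add_sum_nonempty_union,
      add_right_comm, ← two_nsmul]
    exact h S hS
  intro S hS
  rw [← add_eq_left (a := Q S), add_sum_nonempty_union, ← signedUpperSum_apply_of_even Q hS, fixed]

end SignedUpperSum

/-- (Theorem 3, symmetric relations.) If `Q` satisfies the odd-`m` relations,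
then it also satisfies the even-`m` relations. -/
theorem even_relations_from_odd_relations (N : ℕ) (hN : 1 ≤ N)
    (Q : Finset (Fin N) → ℝ)
    (h : ∀ S : Finset (Fin N), Odd S.card →
      Q S = -(1 / 2) * ∑ T ∈ Sᶜ.powerset.filter (· ≠ ∅), Q (S ∪ T)) :
    ∀ S : Finset (Fin N), Even S.card →
      ∑ T ∈ Sᶜ.powerset.filter (· ≠ ∅), Q (S ∪ T) = 0 :=
  even_relations_from_odd_relations_general Q fun S hS => by linarith [h S hS, two_nsmul (Q S)]
end
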